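/- Standard form of P-s-Gevrey asymptotic expansions (Theorem 7.3, part (1)): Let d ≥ 1, s > 0, ℓ an injective linear form, P holomorphic on D(0;R) with P(0) = 0 and P not identically zero, and a ∈ ℕ^d the ℓ-minimal exponent of the Taylor series of P at 0. Let Π = Π_P(θ_1,θ_2;R) be a P-sector and f : Π → ℂ holomorphic. If f admits a P-s-Gevrey asymptotic expansion in the estimate sense, then there exist ρ > 0, a sequence (g_n) of bounded holomorphic functions on D(0;ρ) with ∂^β g_n(0) = 0 for every n and every β ∈ a + ℕ^d, and constants K, A > 0 such that sup_{D(0;ρ)}|g_n| ≤ K·A^n·Γ(sn+1) for every n and |f(x) − Σ_{n<N} g_n(x)·P(x)^n| ≤ K·A^N·Γ(sN+1)·|P(x)|^N for every N ∈ ℕ and every x ∈ Π ∩ D(0;ρ). -/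

import Mathlib

open Set Complex

noncomputable section

/-- Open polydisk of radius `r` centered at `0` in `ℂ^d`. -/
def polydisk (d : ℕ) (r : ℝ) : Set (Fin d → ℂ) :=
  {x | ∀ j, ‖x j‖ < r}

/-- The `P`-sector `Π_P(a,b;r)`. -/
def PSector (d : ℕ) (P : (Fin d → ℂ) → ℂ) (a b r : ℝ) : Set (Fin d → ℂ) :=
  {x | (∀ j, 0 < ‖x j‖ ∧ ‖x j‖ < r) ∧ P x ≠ 0 ∧
    ∃ θ ∈ Set.Ioo a b, P x = (‖P x‖ : ℂ) * Complex.exp (θ * Complex.I)}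

/-- Partial derivative in the `j`-th coordinate direction. -/
def pderivCoord {d : ℕ} (j : Fin d) (f : (Fin d → ℂ) → ℂ) : (Fin d → ℂ) → ℂ :=
  fun x => fderiv ℂ f x (Pi.single j 1)

/-- Mixed partial derivative `∂^β = ∂^{β_1}_{x_1} ⋯ ∂^{β_d}_{x_d}`. -/
def mixedPartial {d : ℕ} (β : Fin d → ℕ) (f : (Fin d → ℂ) → ℂ) : (Fin d → ℂ) → ℂ :=
  (List.finRange d).foldr (fun j g => (pderivCoord j)^[β j] g) f

/-!
The differences `f_{n+1} - f_n` are `O(|P|^n)` on the sector. Consider complex disks `x + ζ v`,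
`|ζ| ≤ 1`, on whose boundary circle `P` stays away from `0`: by the open mapping theorem the sector
accumulates at every zero of `P` in such a disk, so `P^n` divides `f_{n+1} - f_n` there. The
quotient `q_n` at the centre `x` is its mean over the circle, which shows both that `q_n` is
holomorphic in `x` and that it exceeds the bound of `f_{n+1} - f_n` by at most a geometric factor.

For weights `w_j = e^{-τ ℓ_j}` with `τ` large, the monomial `x^a` dominates all the other terms of
`P` in the weighted `ℓ¹` norm, so a Neumann series divides by `P` with a remainder having no
exponent in `a + ℕ^d`. Starting from `t_0 = f_0` and dividing `q_n + t_n = P t_{n+1} + g_n`, the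
sum telescopes to `∑_{n<N} g_n P^n = f_N - t_N P^N`.
-/

open Filter Topology Metric

section GeometricBounds

/-- `x n = O(Aⁿ M n)` for some `A`, with the constant uniform in `n`. For `M n = Γ(s n + 1)` these
are the `s`-Gevrey estimates. -/
def IsGeomBounded (x M : ℕ → ℝ) : Prop :=
  ∃ K A : ℝ, 0 < K ∧ 0 < A ∧ ∀ n, x n ≤ K * A ^ n * M n

/-- A positive weight sequence which, up to constants and geometric factors, is increasing and
stable under the index shift. -/
structure IsRegularWeight (M : ℕ → ℝ) : Prop where
  pos : ∀ n, 0 < M n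
  exists_le_mul_succ : ∃ C, ∀ n, M n ≤ C * M (n + 1)
  isGeomBounded_succ : IsGeomBounded (fun n => M (n + 1)) M

variable {x y M : ℕ → ℝ}

lemma IsGeomBounded.mono (hy : IsGeomBounded y M) (hxy : ∀ n, x n ≤ y n) : IsGeomBounded x M := by
  obtain ⟨K, A, hK, hA, h⟩ := hy
  exact ⟨K, A, hK, hA, fun n => (hxy n).trans (h n)⟩

lemma IsGeomBounded.exists_le_base (hx : IsGeomBounded x M) (hM : ∀ n, 0 ≤ M n) (A₀ : ℝ) :
    ∃ K A : ℝ, 0 < K ∧ A₀ ≤ A ∧ 1 ≤ A ∧ ∀ n, x n ≤ K * A ^ n * M n := by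
  obtain ⟨K, A, hK, hA, h⟩ := hx
  refine ⟨K, max A (max A₀ 1), hK, by simp, by simp, fun n => (h n).trans ?_⟩
  have := hM n
  gcongr
  exact le_max_left _ _

lemma IsGeomBounded.add (hx : IsGeomBounded x M) (hy : IsGeomBounded y M) (hM : ∀ n, 0 ≤ M n) :
    IsGeomBounded (fun n => x n + y n) M := by
  obtain ⟨K, A, hK, hA, hx⟩ := hx
  obtain ⟨L, B, hL, hAB, hB, hy⟩ := hy.exists_le_base hM A
  refine ⟨K + L, B, by positivity, by positivity, fun n => ?_⟩
  have := hM n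
  calc x n + y n ≤ K * A ^ n * M n + L * B ^ n * M n := add_le_add (hx n) (hy n)
    _ ≤ K * B ^ n * M n + L * B ^ n * M n := by gcongr
    _ = (K + L) * B ^ n * M n := by ring

lemma IsGeomBounded.const_mul (hx : IsGeomBounded x M) {c : ℝ} (hc : 0 < c) :
    IsGeomBounded (fun n => c * x n) M := by
  obtain ⟨K, A, hK, hA, h⟩ := hx
  refine ⟨c * K, A, by positivity, hA, fun n => ?_⟩
  calc c * x n ≤ c * (K * A ^ n * M n) := by gcongr; exact h n
    _ = c * K * A ^ n * M n := by ring

lemma IsGeomBounded.div_pow (hx : IsGeomBounded x M) {m : ℝ} (hm : 0 < m) :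
    IsGeomBounded (fun n => x n / m ^ n) M := by
  obtain ⟨K, A, hK, hA, h⟩ := hx
  refine ⟨K, A / m, hK, by positivity, fun n => ?_⟩
  calc x n / m ^ n ≤ K * A ^ n * M n / m ^ n := by gcongr; exact h n
    _ = K * (A / m) ^ n * M n := by rw [_root_.div_pow]; ring

lemma IsGeomBounded.succ (hx : IsGeomBounded x M) (hM : IsRegularWeight M) :
    IsGeomBounded (fun n => x (n + 1)) M := by
  obtain ⟨K, A, hK, hA, h⟩ := hx
  obtain ⟨L, B, hL, hB, hM⟩ := hM.isGeomBounded_succ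
  refine ⟨K * A * L, A * B, by positivity, by positivity, fun n => ?_⟩
  calc x (n + 1) ≤ K * A ^ (n + 1) * M (n + 1) := h _
    _ ≤ K * A ^ (n + 1) * (L * B ^ n * M n) := by gcongr; exact hM n
    _ = K * A * L * (A * B) ^ n * M n := by ring

lemma IsGeomBounded.of_succ_le (hy : IsGeomBounded y M) (hM : IsRegularWeight M) {B : ℝ}
    (hB : 0 ≤ B) (hx : ∀ n, x (n + 1) ≤ B * (y n + x n)) : IsGeomBounded x M := by
  obtain ⟨C, hC⟩ := hM.exists_le_mul_succ
  obtain ⟨L, A, hL, hA, hA1, hy⟩ := hy.exists_le_base (fun n => (hM.pos n).le) (2 * B * C)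
  have hM0 := hM.pos 0
  refine ⟨max L (x 0 / M 0), A, by positivity, by positivity, fun n => ?_⟩
  have hLK : L ≤ max L (x 0 / M 0) := le_max_left _ _
  have hxK : x 0 / M 0 ≤ max L (x 0 / M 0) := le_max_right _ _
  set K := max L (x 0 / M 0)
  have : 0 < K := hL.trans_le hLK
  induction n with
  | zero => simpa using (div_le_iff₀ hM0).1 hxK
  | succ n ih =>
    have hMn := hM.pos n
    have hMn' := hM.pos (n + 1)
    calc x (n + 1) ≤ B * (y n + x n) := hx n
      _ ≤ B * (L * A ^ n * M n + K * A ^ n * M n) := by gcongr; exact hy n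
      _ ≤ B * (K * A ^ n * M n + K * A ^ n * M n) := by gcongr
      _ = K * A ^ n * (2 * B * M n) := by ring
      _ ≤ K * A ^ n * (2 * B * (C * M (n + 1))) := by gcongr; exact hC n
      _ = K * A ^ n * (2 * B * C) * M (n + 1) := by ring
      _ ≤ K * A ^ n * A * M (n + 1) := by gcongr
      _ = K * A ^ (n + 1) * M (n + 1) := by ring

end GeometricBounds

section Gamma

lemma Gamma_le_one {y : ℝ} (h1 : 1 ≤ y) (h2 : y ≤ 2) : Real.Gamma y ≤ 1 := by
  have h := Real.convexOn_Gamma.2 (mem_Ioi.2 one_pos) (mem_Ioi.2 two_pos)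
    (sub_nonneg.2 h2) (sub_nonneg.2 h1) (by ring)
  simp only [smul_eq_mul, Real.Gamma_one, Real.Gamma_two] at h
  ring_nf at h
  exact h

lemma one_le_Gamma {y : ℝ} (hy : 2 ≤ y) : 1 ≤ Real.Gamma y :=
  Real.Gamma_two ▸ Real.Gamma_strictMonoOn_Ici.monotoneOn self_mem_Ici hy hy

lemma one_half_le_Gamma {y : ℝ} (hy : 1 ≤ y) : 1 / 2 ≤ Real.Gamma y := by
  rcases le_total 2 y with h | h
  · linarith [one_le_Gamma h]
  · have hle : 1 ≤ y * Real.Gamma y := by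
      rw [← Real.Gamma_add_one (by positivity)]
      exact one_le_Gamma (by linarith)
    nlinarith [Real.Gamma_pos_of_pos (one_pos.trans_le hy)]

lemma Gamma_le_two_mul_Gamma {x y : ℝ} (hx : 1 ≤ x) (hxy : x ≤ y) :
    Real.Gamma x ≤ 2 * Real.Gamma y := by
  have hy := one_half_le_Gamma (hx.trans hxy)
  rcases le_total 2 x with h | h
  · linarith [Real.Gamma_strictMonoOn_Ici.monotoneOn h (h.trans hxy) hxy]
  · linarith [Gamma_le_one hx h]

lemma Gamma_add_natCast_le {x : ℝ} (hx : 0 < x) (k : ℕ) :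
    Real.Gamma (x + k) ≤ Real.Gamma x * (x + k) ^ k := by
  induction k with
  | zero => simp
  | succ k ih =>
    have := Real.Gamma_pos_of_pos hx
    push_cast
    calc Real.Gamma (x + (k + 1)) = (x + k) * Real.Gamma (x + k) := by
          rw [← add_assoc, Real.Gamma_add_one (by positivity)]
      _ ≤ (x + k) * (Real.Gamma x * (x + k) ^ k) := by gcongr
      _ = Real.Gamma x * (x + k) ^ (k + 1) := by ring
      _ ≤ Real.Gamma x * (x + (k + 1)) ^ (k + 1) := by gcongr; linarith

lemma pow_le_factorial_mul_exp {x : ℝ} (hx : 0 ≤ x) (k : ℕ) :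
    x ^ k ≤ k.factorial * Real.exp x := by
  rw [← div_le_iff₀' (by positivity)]
  exact Real.pow_div_factorial_le_exp x hx k

lemma isRegularWeight_Gamma {s : ℝ} (hs : 0 < s) :
    IsRegularWeight fun n => Real.Gamma (s * n + 1) where
  pos n := Real.Gamma_pos_of_pos (by positivity)
  exists_le_mul_succ := by
    refine ⟨2, fun n => Gamma_le_two_mul_Gamma ?_ ?_⟩
    · linarith [show 0 ≤ s * n by positivity]
    · gcongr
      exact n.le_succ
  isGeomBounded_succ := by
    obtain ⟨k, hk⟩ := exists_nat_ge s
    refine ⟨2 * (k.factorial * Real.exp (1 + k)), Real.exp s, by positivity, by positivity,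
      fun n => ?_⟩
    have hsn : 0 ≤ s * n := by positivity
    have := Real.Gamma_pos_of_pos (show 0 < s * n + 1 by positivity)
    calc Real.Gamma (s * (n + 1 : ℕ) + 1) ≤ 2 * Real.Gamma (s * n + 1 + k) := by
          push_cast
          exact Gamma_le_two_mul_Gamma (by linarith) (by linarith)
      _ ≤ 2 * (Real.Gamma (s * n + 1) * (s * n + 1 + k) ^ k) := by
          gcongr
          exact Gamma_add_natCast_le (by positivity) k
      _ ≤ 2 * (Real.Gamma (s * n + 1) * (k.factorial * Real.exp (s * n + 1 + k))) := by
          gcongr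
          exact pow_le_factorial_mul_exp (by positivity) k
      _ = 2 * (k.factorial * Real.exp (1 + k)) * Real.exp s ^ n * Real.Gamma (s * n + 1) := by
          rw [← Real.exp_nat_mul, show s * n + 1 + k = 1 + k + n * s by ring, Real.exp_add]
          ring

end Gamma

section HolomorphicIntegrals

open MeasureTheory

variable {α E : Type*} [MeasurableSpace α] {μ : Measure α}
  [NormedAddCommGroup E] [NormedSpace ℂ E] {U : Set ℂ} {F : ℂ → α → E}

lemma aestronglyMeasurable_deriv_of_differentiableOn (hU : IsOpen U)
    (hmeas : ∀ t ∈ U, AEStronglyMeasurable (F t) μ)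
    (hdiff : ∀ a, DifferentiableOn ℂ (F · a) U) {t₀ : ℂ} (ht₀ : t₀ ∈ U) :
    AEStronglyMeasurable (fun a => deriv (F · a) t₀) μ := by
  classical
  refine aestronglyMeasurable_of_tendsto_ae (𝓝[≠] t₀)
    (f := fun t a => if t ∈ U then slope (F · a) t₀ t else 0) (fun t => ?_)
    (Eventually.of_forall fun a => ?_)
  · split_ifs with ht
    · exact ((hmeas t ht).sub (hmeas t₀ ht₀)).const_smul _
    · exact aestronglyMeasurable_const
  · have hderiv := ((hdiff a).differentiableAt (hU.mem_nhds ht₀)).hasDerivAt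
    refine hderiv.tendsto_slope.congr' ?_
    filter_upwards [nhdsWithin_le_nhds (hU.mem_nhds ht₀)] with t ht
    rw [if_pos ht]

lemma norm_deriv_le_of_mem_ball {f : ℂ → E} {t₀ t : ℂ} {ε M : ℝ} (ht : t ∈ ball t₀ ε)
    (hf : DifferentiableOn ℂ f (ball t₀ (3 * ε))) (hM : ∀ z ∈ ball t₀ (3 * ε), ‖f z‖ ≤ M) :
    ‖deriv f t‖ ≤ M / ε := by
  have hε : 0 < ε := dist_nonneg.trans_lt ht
  have hsub : closedBall t ε ⊆ ball t₀ (3 * ε) :=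
    closedBall_subset_ball' (by linarith [mem_ball.1 ht])
  refine Complex.norm_deriv_le_of_forall_mem_sphere_norm_le hε
    ((hf.mono ?_).diffContOnCl) fun z hz => hM z (hsub (sphere_subset_closedBall hz))
  rwa [closure_ball _ hε.ne']

lemma differentiableOn_integral_of_norm_le [CompleteSpace E] [IsFiniteMeasure μ] (hU : IsOpen U)
    (hmeas : ∀ t ∈ U, AEStronglyMeasurable (F t) μ)
    (hdiff : ∀ a, DifferentiableOn ℂ (F · a) U)
    {M : ℝ} (hM : ∀ t ∈ U, ∀ a, ‖F t a‖ ≤ M) :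
    DifferentiableOn ℂ (fun t => ∫ a, F t a ∂μ) U := by
  intro t₀ ht₀
  obtain ⟨δ, hδ, hball⟩ := Metric.isOpen_iff.1 hU t₀ ht₀
  obtain ⟨ε, rfl⟩ : ∃ ε, δ = 3 * ε := ⟨δ / 3, by ring⟩
  have hε : 0 < ε := by linarith
  have hsub : ball t₀ ε ⊆ U := (ball_subset_ball (by linarith)).trans hball
  refine (hasDerivAt_integral_of_dominated_loc_of_deriv_le (μ := μ) (F := F)
    (F' := fun t a => deriv (F · a) t) (bound := fun _ => M / ε)
    (ball_mem_nhds t₀ hε) ?_ ?_ ?_ ?_ ?_ ?_).2.differentiableAt.differentiableWithinAt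
  · filter_upwards [hU.mem_nhds ht₀] using hmeas
  · exact Integrable.of_bound (hmeas t₀ ht₀) M (Eventually.of_forall (hM t₀ ht₀))
  · exact aestronglyMeasurable_deriv_of_differentiableOn hU hmeas hdiff ht₀
  · exact Eventually.of_forall fun a t ht => norm_deriv_le_of_mem_ball ht ((hdiff a).mono hball)
      fun z hz => hM z (hball hz) a
  · exact integrable_const _
  · exact Eventually.of_forall fun a t ht =>
      ((hdiff a).differentiableAt (hU.mem_nhds (hsub ht))).hasDerivAt

lemma differentiableOn_circleAverage_of_norm_le [CompleteSpace E] (hU : IsOpen U) {c : ℂ}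
    {r M : ℝ} {G : ℂ → ℂ → E} (hcont : ∀ t ∈ U, ContinuousOn (G t) (sphere c |r|))
    (hdiff : ∀ ζ ∈ sphere c |r|, DifferentiableOn ℂ (G · ζ) U)
    (hM : ∀ t ∈ U, ∀ ζ ∈ sphere c |r|, ‖G t ζ‖ ≤ M) :
    DifferentiableOn ℂ (fun t => Real.circleAverage (G t) c r) U := by
  have hmem := circleMap_mem_sphere' c r
  simp only [Real.circleAverage_def, intervalIntegral.integral_of_le Real.two_pi_pos.le]
  refine (differentiableOn_integral_of_norm_le hU (fun t ht => ?_) (fun θ => hdiff _ (hmem θ))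
    fun t ht θ => hM t ht _ (hmem θ)).const_smul _
  exact ((hcont t ht).comp_continuous (continuous_circleMap c r) hmem).aestronglyMeasurable

lemma norm_circleAverage_le_of_norm_le {f : ℂ → E} {c : ℂ} {r M : ℝ}
    (hM : ∀ ζ ∈ sphere c |r|, ‖f ζ‖ ≤ M) : ‖Real.circleAverage f c r‖ ≤ M := by
  have hintegral : ‖∫ θ in (0)..2 * Real.pi, f (circleMap c r θ)‖ ≤ M * |2 * Real.pi - 0| :=
    intervalIntegral.norm_integral_le_of_norm_le_const fun θ _ => hM _ (circleMap_mem_sphere' c r θ)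
  rw [sub_zero, abs_of_pos Real.two_pi_pos] at hintegral
  rw [Real.circleAverage_def, norm_smul, norm_inv, Real.norm_of_nonneg Real.two_pi_pos.le,
    inv_mul_le_iff₀' Real.two_pi_pos]
  exact hintegral

end HolomorphicIntegrals

section Polydisk

variable {d : ℕ} {r ρ : ℝ}

lemma mem_polydisk_iff_norm_lt (hr : 0 < r) {x : Fin d → ℂ} : x ∈ polydisk d r ↔ ‖x‖ < r :=
  (pi_norm_lt_iff hr).symm

lemma polydisk_eq_ball (hr : 0 < r) : polydisk d r = ball 0 r := by
  ext x
  rw [mem_polydisk_iff_norm_lt hr, mem_ball_zero_iff]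

lemma isOpen_polydisk : IsOpen (polydisk d r) := by
  simp only [polydisk, ofPred_forall]
  exact isOpen_iInter_of_finite fun j => isOpen_lt (by fun_prop) continuous_const

lemma polydisk_subset_polydisk (h : r ≤ ρ) : polydisk d r ⊆ polydisk d ρ :=
  fun _ hx j => (hx j).trans_le h

lemma update_mem_polydisk {x : Fin d → ℂ} (hx : x ∈ polydisk d ρ) (j : Fin d) {t : ℂ}
    (ht : ‖t‖ < ρ) : Function.update x j t ∈ polydisk d ρ := by
  intro i
  rcases eq_or_ne i j with rfl | h
  · rwa [Function.update_self]
  · rw [Function.update_of_ne h]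
    exact hx i

lemma cons_mem_polydisk {z : ℂ} {y : Fin d → ℂ} (hz : ‖z‖ < ρ) (hy : y ∈ polydisk d ρ) :
    (Fin.cons z y : Fin (d + 1) → ℂ) ∈ polydisk (d + 1) ρ :=
  Fin.cases hz hy

end Polydisk

/-- Holomorphy in each variable separately on a polydisk. Unlike joint holomorphy it passes through
integrals over a parameter one variable at a time. -/
def SeparatelyHolomorphic (d : ℕ) (ρ : ℝ) (h : (Fin d → ℂ) → ℂ) : Prop :=
  ∀ x ∈ polydisk d ρ, ∀ j, DifferentiableOn ℂ (fun t => h (Function.update x j t)) (ball 0 ρ)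

namespace SeparatelyHolomorphic

variable {d : ℕ} {r ρ M : ℝ} {h : (Fin d → ℂ) → ℂ}

lemma of_analyticOnNhd (hh : AnalyticOnNhd ℂ h (polydisk d ρ)) : SeparatelyHolomorphic d ρ h := by
  intro x hx j t ht
  have hupdate : DifferentiableAt ℂ (fun t : ℂ => Function.update x j t) t :=
    (hasFDerivAt_update x t).differentiableAt
  have hmem := update_mem_polydisk hx j (mem_ball_zero_iff.1 ht)
  exact ((hh _ hmem).differentiableAt.comp t hupdate).differentiableWithinAt

lemma circleAverage {Φ : ℂ → (Fin d → ℂ) → ℂ} {c : ℂ}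
    (hΦ : ∀ ζ ∈ sphere c |r|, SeparatelyHolomorphic d ρ (Φ ζ))
    (hcont : ∀ x ∈ polydisk d ρ, ContinuousOn (Φ · x) (sphere c |r|))
    (hM : ∀ x ∈ polydisk d ρ, ∀ ζ ∈ sphere c |r|, ‖Φ ζ x‖ ≤ M) :
    SeparatelyHolomorphic d ρ fun x => Real.circleAverage (Φ · x) c r := by
  intro x hx j
  have hmem : ∀ t ∈ ball (0 : ℂ) ρ, Function.update x j t ∈ polydisk d ρ := fun t ht =>
    update_mem_polydisk hx j (mem_ball_zero_iff.1 ht)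
  exact differentiableOn_circleAverage_of_norm_le isOpen_ball (fun t ht => hcont _ (hmem t ht))
    (fun ζ hζ => hΦ ζ hζ x hx j) fun t ht => hM _ (hmem t ht)

end SeparatelyHolomorphic

section Monomials

/-- The monomial `x^α = ∏ⱼ xⱼ^αⱼ`. -/
def monom {ι R : Type*} [Fintype ι] [CommMonoid R] (x : ι → R) (α : ι → ℕ) : R :=
  ∏ j, x j ^ α j

variable {ι R : Type*} [Fintype ι]

lemma monom_zero_right [CommMonoid R] (x : ι → R) : monom x 0 = 1 := by
  simp [monom]

lemma monom_add [CommMonoid R] (x : ι → R) (α β : ι → ℕ) :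
    monom x (α + β) = monom x α * monom x β := by
  simp only [monom, Pi.add_apply, pow_add, Finset.prod_mul_distrib]

lemma mul_monom [CommMonoid R] (x y : ι → R) (α : ι → ℕ) :
    monom (x * y) α = monom x α * monom y α := by
  simp only [monom, Pi.mul_apply, mul_pow, Finset.prod_mul_distrib]

lemma monom_cons [CommMonoid R] {d : ℕ} (z : R) (y : Fin d → R) (k : ℕ) (α : Fin d → ℕ) :
    monom (Fin.cons z y : Fin (d + 1) → R) (Fin.cons k α) = z ^ k * monom y α := by
  simp only [monom, Fin.prod_univ_succ, Fin.cons_zero, Fin.cons_succ]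

lemma norm_monom [NormedField R] (x : ι → R) (α : ι → ℕ) :
    ‖monom x α‖ = monom (fun j => ‖x j‖) α := by
  simp only [monom, norm_prod, norm_pow]

lemma monom_ne_zero [Field R] {x : ι → R} (hx : ∀ j, x j ≠ 0) (α : ι → ℕ) : monom x α ≠ 0 :=
  Finset.prod_ne_zero_iff.2 fun j _ => pow_ne_zero _ (hx j)

lemma monom_nonneg {u : ι → ℝ} (hu : ∀ j, 0 ≤ u j) (α : ι → ℕ) : 0 ≤ monom u α :=
  Finset.prod_nonneg fun j _ => pow_nonneg (hu j) _

lemma monom_le_monom {u v : ι → ℝ} (hu : ∀ j, 0 ≤ u j) (huv : ∀ j, u j ≤ v j) (α : ι → ℕ) :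
    monom u α ≤ monom v α :=
  Finset.prod_le_prod (fun j _ => pow_nonneg (hu j) _) fun j _ => pow_le_pow_left₀ (hu j) (huv j) _

variable {d : ℕ}

lemma summable_monom {u : Fin d → ℝ} (hu₀ : ∀ j, 0 ≤ u j) (hu₁ : ∀ j, u j < 1) :
    Summable (monom u) := by
  induction d with
  | zero => exact (hasSum_fintype _).summable
  | succ d ih =>
    rw [← (Fin.consEquiv fun _ => ℕ).summable_iff]
    have htail : Summable (monom (Fin.tail u)) := ih (fun j => hu₀ _) (fun j => hu₁ _)
    refine ((summable_geometric_of_lt_one (hu₀ 0) (hu₁ 0)).mul_of_nonneg htail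
      (fun k => pow_nonneg (hu₀ 0) k) (monom_nonneg fun j => hu₀ _)).congr fun p => ?_
    rw [← monom_cons, Fin.cons_self_tail]
    rfl

lemma summable_mul_monom {c : (Fin d → ℕ) → ℂ} {M r : ℝ}
    (hc : ∀ α, ‖c α‖ ≤ M * monom (fun _ => r⁻¹) α) {x : Fin d → ℂ} (hx : x ∈ polydisk d r) :
    Summable fun α => c α * monom x α := by
  have hgeom : Summable (monom fun j => r⁻¹ * ‖x j‖) := by
    refine summable_monom (fun j => ?_) fun j => ?_ <;>
      have hr : 0 < r := (norm_nonneg _).trans_lt (hx j)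
    · positivity
    · rw [inv_mul_lt_one₀ hr]
      exact hx j
  refine (hgeom.mul_left M).of_norm_bounded fun α => ?_
  rw [norm_mul, norm_monom]
  calc ‖c α‖ * monom (fun j => ‖x j‖) α
      ≤ M * monom (fun _ => r⁻¹) α * monom (fun j => ‖x j‖) α := by
        have := monom_nonneg (fun j => norm_nonneg (x j)) α
        gcongr
        exact hc α
    _ = M * monom (fun j => r⁻¹ * ‖x j‖) α := by
        rw [mul_assoc, ← mul_monom]
        rfl

lemma hasSum_monom_cons {c : (Fin (d + 1) → ℕ) → ℂ} {z : ℂ} {y : Fin d → ℂ} {H : ℕ → ℂ} {s : ℂ}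
    (hsummable : Summable fun α => c α * monom (Fin.cons z y : Fin (d + 1) → ℂ) α)
    (hH : ∀ k, HasSum (fun α => c (Fin.cons k α) * monom y α) (H k))
    (hs : HasSum (fun k => z ^ k * H k) s) :
    HasSum (fun α => c α * monom (Fin.cons z y : Fin (d + 1) → ℂ) α) s := by
  let e := Fin.consEquiv fun _ : Fin (d + 1) => ℕ
  have hfiber (k : ℕ) : HasSum (fun α : Fin d → ℕ =>
      c (e (k, α)) * monom (Fin.cons z y : Fin (d + 1) → ℂ) (e (k, α))) (z ^ k * H k) := by
    refine ((hH k).mul_left (z ^ k)).congr_fun fun α => ?_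
    change c (Fin.cons k α) * monom _ (Fin.cons k α) = _
    rw [monom_cons, mul_left_comm]
  have htotal := (e.summable_iff.2 hsummable).hasSum
  rw [(htotal.prod_fiberwise hfiber).unique hs] at htotal
  exact e.hasSum_iff.1 htotal

/-- `f` is the sum of the power series `∑ c_α x^α` on the polydisk of radius `ρ`. -/
def HasMonomSeries (c : (Fin d → ℕ) → ℂ) (f : (Fin d → ℂ) → ℂ) (ρ : ℝ) : Prop :=
  ∀ x ∈ polydisk d ρ, HasSum (fun α => c α * monom x α) (f x)

end Monomials

section Osgood

lemma hasSum_pow_mul_circleAverage {f : ℂ → ℂ} {r : ℝ} (hf : DiffContOnCl ℂ f (ball 0 r)) {z : ℂ}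
    (hz : ‖z‖ < r) :
    HasSum (fun k : ℕ => z ^ k * Real.circleAverage (fun w => w⁻¹ ^ k * f w) 0 r) (f z) := by
  have hr : 0 < r := (norm_nonneg z).trans_lt hz
  have hintegral : CircleIntegrable f 0 r := by
    refine (hf.continuousOn.mono ?_).circleIntegrable hr.le
    rw [closure_ball _ hr.ne']
    exact sphere_subset_closedBall
  have hsum := hasSum_cauchyPowerSeries_integral hintegral hz
  rw [zero_add, hf.two_pi_i_inv_smul_circleIntegral_sub_inv_smul (mem_ball_zero_iff.2 hz)] at hsum
  refine hsum.congr_fun fun k => ?_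
  rw [Real.circleAverage_eq_circleIntegral hr.ne', cauchyPowerSeries_apply]
  simp only [smul_eq_mul, sub_zero, div_pow]
  rw [mul_left_comm, ← circleIntegral.integral_const_mul]
  congr! 3
  ring

namespace SeparatelyHolomorphic

variable {d : ℕ} {r ρ M : ℝ}

lemma differentiableOn_cons {h : (Fin (d + 1) → ℂ) → ℂ} (hh : SeparatelyHolomorphic (d + 1) ρ h)
    {y : Fin d → ℂ} (hy : y ∈ polydisk d ρ) :
    DifferentiableOn ℂ (fun z => h (Fin.cons z y)) (ball 0 ρ) := by
  intro z hz
  have hmem : (Fin.cons z y : Fin (d + 1) → ℂ) ∈ polydisk (d + 1) ρ :=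
    cons_mem_polydisk (mem_ball_zero_iff.1 hz) hy
  simpa only [Fin.update_cons_zero] using hh _ hmem 0 z hz

lemma comp_cons {h : (Fin (d + 1) → ℂ) → ℂ} (hh : SeparatelyHolomorphic (d + 1) ρ h) {z : ℂ}
    (hz : ‖z‖ < ρ) : SeparatelyHolomorphic d ρ fun y => h (Fin.cons z y) := by
  intro y hy j
  simpa only [← Fin.cons_update] using hh _ (cons_mem_polydisk hz hy) j.succ

lemma const_mul {h : (Fin d → ℂ) → ℂ} (hh : SeparatelyHolomorphic d ρ h) (c : ℂ) :
    SeparatelyHolomorphic d ρ fun x => c * h x :=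
  fun x hx j => (hh x hx j).const_mul c

lemma exists_hasSum_pow_mul (hr : 0 < r) (hrρ : r < ρ) {h : (Fin (d + 1) → ℂ) → ℂ}
    (hh : SeparatelyHolomorphic (d + 1) ρ h) (hM : ∀ x ∈ polydisk (d + 1) ρ, ‖h x‖ ≤ M) :
    ∃ H : ℕ → (Fin d → ℂ) → ℂ, (∀ k, SeparatelyHolomorphic d ρ (H k)) ∧
      (∀ k, ∀ y ∈ polydisk d ρ, ‖H k y‖ ≤ M * r⁻¹ ^ k) ∧
      ∀ z : ℂ, ‖z‖ < r → ∀ y ∈ polydisk d ρ,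
        HasSum (fun k => z ^ k * H k y) (h (Fin.cons z y)) := by
  have hnorm : ∀ w ∈ sphere (0 : ℂ) |r|, ‖w‖ = r := fun w hw => by
    rw [mem_sphere_zero_iff_norm.1 hw, abs_of_pos hr]
  have hbound (k : ℕ) : ∀ y ∈ polydisk d ρ, ∀ w ∈ sphere (0 : ℂ) |r|,
      ‖w⁻¹ ^ k * h (Fin.cons w y)‖ ≤ M * r⁻¹ ^ k := by
    intro y hy w hw
    rw [norm_mul, norm_pow, norm_inv, hnorm w hw, mul_comm]
    gcongr
    exact hM _ (cons_mem_polydisk ((hnorm w hw).trans_lt hrρ) hy)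
  refine ⟨fun k y => Real.circleAverage (fun w => w⁻¹ ^ k * h (Fin.cons w y)) 0 r, fun k => ?_,
    fun k y hy => norm_circleAverage_le_of_norm_le (hbound k y hy), fun z hz y hy => ?_⟩
  · refine SeparatelyHolomorphic.circleAverage
      (fun w hw => (hh.comp_cons ((hnorm w hw).trans_lt hrρ)).const_mul _) (fun y hy => ?_)
      (hbound k)
    have hw_ne : ∀ w ∈ sphere (0 : ℂ) |r|, w ≠ 0 := fun w hw =>
      norm_pos_iff.1 ((hnorm w hw).symm ▸ hr)
    refine ((continuousOn_id.inv₀ hw_ne).pow k).mul ((hh.differentiableOn_cons hy).continuousOn.mono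
      fun w hw => ?_)
    exact mem_ball_zero_iff.2 ((hnorm w hw).trans_lt hrρ)
  · refine hasSum_pow_mul_circleAverage (DifferentiableOn.diffContOnCl ?_) hz
    rw [closure_ball _ hr.ne']
    exact (hh.differentiableOn_cons hy).mono (closedBall_subset_ball hrρ)

theorem exists_hasMonomSeries (hr : 0 < r) (hrρ : r < ρ) {h : (Fin d → ℂ) → ℂ}
    (hh : SeparatelyHolomorphic d ρ h) (hM : ∀ x ∈ polydisk d ρ, ‖h x‖ ≤ M) :
    ∃ c : (Fin d → ℕ) → ℂ, (∀ α, ‖c α‖ ≤ M * monom (fun _ => r⁻¹) α) ∧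
      HasMonomSeries c h r := by
  induction d generalizing M with
  | zero =>
    refine ⟨fun _ => h 0, fun α => ?_, fun x _ => ?_⟩
    · simpa [monom] using hM 0 (fun j => j.elim0)
    · rw [Subsingleton.elim x 0]
      simp [monom]
  | succ d ih =>
    obtain ⟨H, hHhol, hHbound, hHsum⟩ := hh.exists_hasSum_pow_mul hr hrρ hM
    choose c hc hcsum using fun k => ih (hHhol k) (hHbound k)
    have hcbound (α : Fin (d + 1) → ℕ) :
        ‖c (α 0) (Fin.tail α)‖ ≤ M * monom (fun _ => r⁻¹) α := by
      refine (hc _ _).trans_eq ?_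
      simp only [monom, Fin.prod_univ_succ, Fin.tail, mul_assoc]
    refine ⟨fun α => c (α 0) (Fin.tail α), hcbound, fun x hx => ?_⟩
    have hsummable := summable_mul_monom hcbound hx
    rw [← Fin.cons_self_tail x] at hsummable ⊢
    exact hasSum_monom_cons hsummable (fun k => hcsum k _ fun j => hx _)
      (hHsum _ (hx 0) _ fun j => (hx _).trans hrρ)

end SeparatelyHolomorphic

end Osgood

section Analyticity

variable {d : ℕ} {c : (Fin d → ℕ) → ℂ} {f : (Fin d → ℂ) → ℂ} {r ρ : ℝ}

lemma exists_continuousMultilinearMap_apply_eq_monom (α : Fin d → ℕ) {n : ℕ} (hn : ∑ j, α j = n) :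
    ∃ μ : ContinuousMultilinearMap ℂ (fun _ : Fin n => Fin d → ℂ) ℂ,
      ‖μ‖ ≤ 1 ∧ ∀ x, μ (fun _ => x) = monom x α := by
  let μ := (ContinuousMultilinearMap.mkPiAlgebra ℂ (Σ j, Fin (α j)) ℂ).compContinuousLinearMap
    fun i => ContinuousLinearMap.proj (R := ℂ) (φ := fun _ : Fin d => ℂ) i.1
  refine ⟨μ.domDomCongr (finSigmaFinEquiv.trans (finCongr hn)), ?_, fun x => ?_⟩
  · rw [ContinuousMultilinearMap.norm_domDomCongr]
    refine (ContinuousMultilinearMap.norm_compContinuousLinearMap_le _ _).trans ?_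
    rw [ContinuousMultilinearMap.norm_mkPiAlgebra, one_mul]
    refine Finset.prod_le_one (fun _ _ => norm_nonneg _) fun i _ => ?_
    refine ContinuousLinearMap.opNorm_le_bound _ zero_le_one fun x => ?_
    rw [one_mul]
    exact norm_le_pi_norm x _
  · simp [μ, monom, Fintype.prod_sigma]

lemma exists_formalMultilinearSeries_eq_sum_monom (c : (Fin d → ℕ) → ℂ) :
    ∃ p : FormalMultilinearSeries ℂ (Fin d → ℂ) ℂ,
      (∀ n, ‖p n‖ ≤ ∑ α ∈ Finset.piAntidiag Finset.univ n, ‖c α‖) ∧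
      ∀ n x, p n (fun _ => x) = ∑ α ∈ Finset.piAntidiag Finset.univ n, c α * monom x α := by
  choose μ hμ_norm hμ using fun (n : ℕ)
    (α : {α : Fin d → ℕ // α ∈ Finset.piAntidiag Finset.univ n}) =>
    exists_continuousMultilinearMap_apply_eq_monom α.1 (Finset.mem_piAntidiag.1 α.2).1
  refine ⟨fun n => ∑ α, c α.1 • μ n α, fun n => ?_, fun n x => ?_⟩
  · refine (norm_sum_le _ _).trans ?_
    rw [← Finset.sum_coe_sort (Finset.piAntidiag Finset.univ n)]
    refine Finset.sum_le_sum fun α _ => ?_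
    rw [norm_smul]
    exact mul_le_of_le_one_right (norm_nonneg _) (hμ_norm n α)
  · rw [← Finset.sum_coe_sort (Finset.piAntidiag Finset.univ n)]
    simp [hμ]

lemma hasSum_sum_piAntidiag {ι E : Type*} [Fintype ι] [DecidableEq ι] [AddCommMonoid E]
    [TopologicalSpace E] [ContinuousAdd E] [RegularSpace E] {g : (ι → ℕ) → E} {s : E}
    (hg : HasSum g s) : HasSum (fun n => ∑ α ∈ Finset.piAntidiag Finset.univ n, g α) s := by
  have hmem (n : ℕ) (α : ι → ℕ) : ∑ j, α j = n ↔ α ∈ Finset.piAntidiag Finset.univ n := by simp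
  refine ((Equiv.sigmaFiberEquiv fun α : ι → ℕ => ∑ j, α j).hasSum_iff.2 hg).sigma fun n => ?_
  exact (Equiv.subtypeEquivRight (hmem n)).hasSum_iff.2
    ((Finset.piAntidiag Finset.univ n).hasSum g)

lemma monom_const {ι R : Type*} [Fintype ι] [CommMonoid R] (r : R) (α : ι → ℕ) :
    monom (fun _ => r) α = r ^ ∑ j, α j :=
  Finset.prod_pow_eq_pow_sum _ _ _

lemma summable_norm_mul_pow_of_summable_monom (hr : 0 ≤ r)
    (hc : Summable fun α => c α * monom (fun _ => (r : ℂ)) α) :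
    Summable fun α => ‖c α‖ * r ^ ∑ j, α j := by
  refine hc.norm.congr fun α => ?_
  rw [norm_mul, monom_const, norm_pow, Complex.norm_real, Real.norm_of_nonneg hr]

lemma norm_mul_pow_le_tsum {p : FormalMultilinearSeries ℂ (Fin d → ℂ) ℂ} {n : ℕ}
    (hp : ‖p n‖ ≤ ∑ α ∈ Finset.piAntidiag Finset.univ n, ‖c α‖) (hr : 0 ≤ r)
    (hc : Summable fun α => ‖c α‖ * r ^ ∑ j, α j) :
    ‖p n‖ * r ^ n ≤ ∑' α, ‖c α‖ * r ^ ∑ j, α j :=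
  calc ‖p n‖ * r ^ n ≤ (∑ α ∈ Finset.piAntidiag Finset.univ n, ‖c α‖) * r ^ n := by gcongr
    _ = ∑ α ∈ Finset.piAntidiag Finset.univ n, ‖c α‖ * r ^ ∑ j, α j := by
        rw [Finset.sum_mul]
        exact Finset.sum_congr rfl fun α hα => by rw [(Finset.mem_piAntidiag.1 hα).1]
    _ ≤ ∑' α, ‖c α‖ * r ^ ∑ j, α j := hc.sum_le_tsum _ fun α _ => by positivity

theorem HasMonomSeries.analyticOnNhd (hρ : 0 < ρ) (hf : HasMonomSeries c f ρ) :
    AnalyticOnNhd ℂ f (polydisk d ρ) := by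
  obtain ⟨p, hp_norm, hp⟩ := exists_formalMultilinearSeries_eq_sum_monom c
  have hball : eball (0 : Fin d → ℂ) (ENNReal.ofReal ρ) = polydisk d ρ := by
    rw [eball_ofReal, polydisk_eq_ball hρ]
  have hseries : HasFPowerSeriesOnBall f p 0 (ENNReal.ofReal ρ) := by
    refine ⟨ENNReal.le_of_forall_nnreal_lt fun r hr => ?_, by simpa using hρ, fun {x} hx => ?_⟩
    · have hrρ : (r : ℝ) < ρ := by
        rwa [← ENNReal.ofReal_coe_nnreal, ENNReal.ofReal_lt_ofReal_iff hρ] at hr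
      have hsummable := (hf (fun _ => ((r : ℝ) : ℂ)) fun _ => by simpa using hrρ).summable
      exact p.le_radius_of_bound _ fun n => norm_mul_pow_le_tsum (hp_norm n) r.coe_nonneg
        (summable_norm_mul_pow_of_summable_monom r.coe_nonneg hsummable)
    · rw [hball] at hx
      simpa only [zero_add, hp] using hasSum_sum_piAntidiag (hf x hx)
  exact hball ▸ hseries.analyticOnNhd

end Analyticity

section Derivatives

variable {d : ℕ} {c : (Fin d → ℕ) → ℂ} {f : (Fin d → ℂ) → ℂ} {ρ : ℝ}

lemma monom_update {R : Type*} [CommMonoid R] (x : Fin d → R) (j : Fin d) (t : R) (α : Fin d → ℕ) :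
    monom (Function.update x j t) α = t ^ α j * ∏ i ∈ Finset.univ.erase j, x i ^ α i := by
  rw [monom, ← Finset.mul_prod_erase _ _ (Finset.mem_univ j), Function.update_self]
  congr 1
  exact Finset.prod_congr rfl fun i hi => by rw [Function.update_of_ne (Finset.ne_of_mem_erase hi)]

lemma hasDerivAt_monom_update (x : Fin d → ℂ) (j : Fin d) (α : Fin d → ℕ) :
    HasDerivAt (fun t => monom (Function.update x j t) α)
      (α j * monom x (α - Pi.single j 1)) (x j) := by
  have hlower : monom x (α - Pi.single j 1) =
      x j ^ (α j - 1) * ∏ i ∈ Finset.univ.erase j, x i ^ α i := by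
    rw [← Function.update_eq_self j x, monom_update, Function.update_eq_self]
    congr 1
    · simp
    · exact Finset.prod_congr rfl fun i hi => by simp [Finset.ne_of_mem_erase hi]
  simp only [monom_update, hlower, ← mul_assoc]
  exact (hasDerivAt_pow (α j) (x j)).mul_const _

lemma hasDerivAt_comp_update {x : Fin d → ℂ} (hf : DifferentiableAt ℂ f x) (j : Fin d) :
    HasDerivAt (fun t => f (Function.update x j t)) (pderivCoord j f x) (x j) := by
  rw [← Function.update_eq_self j x] at hf
  have h := hf.hasFDerivAt.comp_hasDerivAt (x j) (hasDerivAt_update x j (x j))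
  rwa [Function.update_eq_self] at h

lemma norm_mul_monom_le {x : Fin d → ℂ} {r : ℝ} (hx : x ∈ polydisk d r) (α : Fin d → ℕ) :
    ‖c α * monom x α‖ ≤ ‖c α‖ * r ^ ∑ j, α j := by
  rw [norm_mul, norm_monom, ← monom_const]
  gcongr
  exact monom_le_monom (fun j => norm_nonneg _) (fun j => (hx j).le) α

lemma exists_mem_polydisk_lt (hρ : 0 < ρ) {x : Fin d → ℂ} (hx : x ∈ polydisk d ρ) :
    ∃ r, 0 < r ∧ r < ρ ∧ x ∈ polydisk d r := by
  obtain ⟨r, hxr, hrρ⟩ := exists_between ((mem_polydisk_iff_norm_lt hρ).1 hx)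
  have hr : 0 < r := (norm_nonneg x).trans_lt hxr
  exact ⟨r, hr, hrρ, (mem_polydisk_iff_norm_lt hr).2 hxr⟩

lemma HasMonomSeries.hasSum_pderivCoord (hρ : 0 < ρ) (hf : HasMonomSeries c f ρ) (j : Fin d)
    {x : Fin d → ℂ} (hx : x ∈ polydisk d ρ) :
    HasSum (fun α => c α * (α j * monom x (α - Pi.single j 1))) (pderivCoord j f x) := by
  obtain ⟨r, hr, hrρ, hxr⟩ := exists_mem_polydisk_lt hρ hx
  have hsummable : Summable fun α => ‖c α‖ * r ^ ∑ j, α j := by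
    refine summable_norm_mul_pow_of_summable_monom hr.le (hf _ fun _ => ?_).summable
    rwa [Complex.norm_real, Real.norm_of_nonneg hr.le]
  have hmem : ∀ t ∈ ball (0 : ℂ) r, Function.update x j t ∈ polydisk d r := fun t ht =>
    update_mem_polydisk hxr j (mem_ball_zero_iff.1 ht)
  have hderiv (α : Fin d → ℕ) := fun t => (hasDerivAt_monom_update (Function.update x j t) j α)
  simp only [Function.update_idem, Function.update_self] at hderiv
  have hsum := Complex.hasSum_deriv_of_summable_norm hsummable
    (fun α t _ => ((hderiv α t).const_mul (c α)).differentiableAt.differentiableWithinAt)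
    isOpen_ball (fun α t ht => norm_mul_monom_le (hmem t ht) α) (mem_ball_zero_iff.2 (hxr j))
  have heq : (fun t => ∑' α, c α * monom (Function.update x j t) α) =ᶠ[𝓝 (x j)]
      fun t => f (Function.update x j t) := by
    filter_upwards [isOpen_ball.mem_nhds (mem_ball_zero_iff.2 (hxr j))] with t ht
    exact (hf _ (polydisk_subset_polydisk hrρ.le (hmem t ht))).tsum_eq
  have hdiff := (hf.analyticOnNhd hρ x hx).differentiableAt
  rw [heq.deriv_eq, (hasDerivAt_comp_update hdiff j).deriv] at hsum
  exact hsum.congr_fun fun α => (((hasDerivAt_monom_update x j α).const_mul (c α)).deriv).symm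

lemma HasMonomSeries.pderivCoord (hρ : 0 < ρ) (hf : HasMonomSeries c f ρ) (j : Fin d) :
    HasMonomSeries (fun α => (α j + 1) * c (α + Pi.single j 1)) (pderivCoord j f) ρ := by
  intro x hx
  have hshift : Function.Injective fun α : Fin d → ℕ => α + Pi.single j 1 :=
    add_left_injective _
  refine ((hshift.hasSum_iff fun α hα => ?_).2 (hf.hasSum_pderivCoord hρ j hx)).congr_fun
    fun α => ?_
  · have hαj : α j = 0 := by
      by_contra hne
      refine hα ⟨α - Pi.single j 1, tsub_add_cancel_of_le ?_⟩
      intro i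
      rcases eq_or_ne i j with rfl | hij
      · simpa using Nat.one_le_iff_ne_zero.2 hne
      · simp [hij]
    simp [hαj]
  · simp only [Function.comp_apply, add_tsub_cancel_right, Pi.add_apply, Pi.single_eq_same]
    push_cast
    ring

lemma HasMonomSeries.iterate_pderivCoord (hρ : 0 < ρ) (hf : HasMonomSeries c f ρ) (j : Fin d)
    (k : ℕ) :
    HasMonomSeries (fun α => (α j + 1).ascFactorial k * c (α + Pi.single j k))
      ((_root_.pderivCoord j)^[k] f) ρ := by
  induction k with
  | zero => simpa using hf
  | succ k ih =>
    rw [Function.iterate_succ_apply']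
    intro x hx
    refine (ih.pderivCoord hρ j x hx).congr_fun fun α => ?_
    have hasc : ((α j + 1).ascFactorial (k + 1) : ℂ) =
        (α j + 1) * (α j + 1 + 1).ascFactorial k := by
      rw [Nat.ascFactorial_succ, ← Nat.succ_ascFactorial]
      push_cast
      ring
    beta_reduce
    rw [hasc, add_comm k 1, Pi.single_add, ← add_assoc α]
    simp only [Pi.add_apply, Pi.single_eq_same]
    ring

lemma HasMonomSeries.foldr_pderivCoord (hρ : 0 < ρ) (hf : HasMonomSeries c f ρ) (β : Fin d → ℕ)
    {l : List (Fin d)} (hl : l.Nodup) :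
    HasMonomSeries (fun α => (l.map fun j => ((α j + 1).ascFactorial (β j) : ℂ)).prod *
      c (α + (l.map fun j => Pi.single j (β j)).sum))
      (l.foldr (fun j g => (_root_.pderivCoord j)^[β j] g) f) ρ := by
  induction l with
  | nil => simpa using hf
  | cons j l ih =>
    obtain ⟨hj, hl⟩ := List.nodup_cons.1 hl
    intro x hx
    refine ((ih hl).iterate_pderivCoord hρ j (β j) x hx).congr_fun fun α => ?_
    have hother : ∀ i ∈ l, (α + Pi.single j (β j) : Fin d → ℕ) i = α i := fun i hi => by
      simp [ne_of_mem_of_not_mem hi hj]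
    beta_reduce
    rw [List.map_cons, List.prod_cons, List.map_cons, List.sum_cons, add_assoc, mul_assoc _ _ (c _)]
    congr 4
    exact List.map_congr_left fun i hi => by rw [hother i hi]

theorem HasMonomSeries.mixedPartial_apply_zero (hρ : 0 < ρ) (hf : HasMonomSeries c f ρ)
    (β : Fin d → ℕ) :
    mixedPartial β f 0 = (∏ j, ((β j).factorial : ℂ)) * c β := by
  have hsum := hf.foldr_pderivCoord hρ β (List.nodup_finRange d) 0 fun j => by simpa using hρ
  have hmonom (α : Fin d → ℕ) (hα : α ≠ 0) : monom (0 : Fin d → ℂ) α = 0 := by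
    obtain ⟨j, hj⟩ := Function.ne_iff.1 hα
    exact Finset.prod_eq_zero (Finset.mem_univ j) (zero_pow hj)
  refine (hsum.unique (hasSum_single 0 fun α hα => by rw [hmonom α hα, mul_zero])).trans ?_
  beta_reduce
  rw [monom_zero_right, mul_one, zero_add, ← List.ofFn_eq_map, ← List.ofFn_eq_map, List.prod_ofFn,
    List.sum_ofFn, Finset.univ_sum_single]
  simp [Nat.one_ascFactorial]

lemma HasMonomSeries.mixedPartial_apply_zero_eq_zero_iff (hρ : 0 < ρ)
    (hf : HasMonomSeries c f ρ) (β : Fin d → ℕ) :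
    mixedPartial β f 0 = 0 ↔ c β = 0 := by
  have hfactorial : ∏ j, ((β j).factorial : ℂ) ≠ 0 :=
    Finset.prod_ne_zero_iff.2 fun j _ => Nat.cast_ne_zero.2 (β j).factorial_ne_zero
  rw [hf.mixedPartial_apply_zero hρ, mul_eq_zero_iff_left hfactorial]

end Derivatives

section Division

lemma exists_add_apply_eq {E : Type*} [NormedAddCommGroup E] [NormedSpace ℂ E] [CompleteSpace E]
    {T : E →L[ℂ] E} (hT : ‖T‖ ≤ 1 / 2) (y : E) : ∃ x, x + T x = y ∧ ‖x‖ ≤ 2 * ‖y‖ := by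
  have hneg : ‖-T‖ < 1 := by
    rw [norm_neg]
    linarith
  let U := Units.oneSub (-T) hneg
  let x : E := (↑U⁻¹ : E →L[ℂ] E) y
  have hx : x + T x = y := by
    simpa [U] using DFunLike.congr_fun U.mul_inv y
  have hTx : ‖T x‖ ≤ 1 / 2 * ‖x‖ := T.le_of_opNorm_le hT x
  have hsub : ‖x‖ ≤ ‖y‖ + ‖T x‖ := by
    simpa only [← hx, add_sub_cancel_right] using norm_sub_le (x + T x) (T x)
  exact ⟨x, hx, by linarith⟩

/-- The Banach space `ℓ¹(M)` of absolutely summable families, to be read as the power series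
`∑ C_α X^α` with exponents `α ∈ M`. -/
abbrev EllOne (M : Type*) := lp (fun _ : M => ℂ) 1

namespace EllOne

variable {M : Type*}

protected lemma hasSum_norm (C : EllOne M) : HasSum (fun i => ‖C i‖) ‖C‖ := by
  simpa using lp.hasSum_norm (by simp) C

lemma exists_coe_eq {c : M → ℂ} (hc : Summable fun i => ‖c i‖) : ∃ C : EllOne M, ⇑C = c :=
  ⟨⟨c, memℓp_gen (by simpa using hc)⟩, rfl⟩

section Single

variable [DecidableEq M]

/-- The monomial `X^i`. -/
def single (i : M) : EllOne M := lp.single 1 i 1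

lemma norm_single (i : M) : ‖single i‖ = 1 := by
  simp [single, lp.norm_single]

lemma single_apply_of_ne {i k : M} (h : k ≠ i) : single i k = 0 :=
  lp.single_apply_ne _ _ _ h

lemma clm_ext {F : Type*} [NormedAddCommGroup F] [NormedSpace ℂ F] {L L' : EllOne M →L[ℂ] F}
    (h : ∀ i, L (single i) = L' (single i)) : L = L' :=
  lp.ext_continuousLinearMap ENNReal.one_ne_top fun i => by
    ext
    exact h i

end Single

variable {E : Type*} [NormedAddCommGroup E] [NormedSpace ℂ E] {v : M → E}

lemma norm_tsum_smul_le (hv : ∀ i, ‖v i‖ ≤ 1) (C : EllOne M) : ‖∑' i, C i • v i‖ ≤ ‖C‖ := by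
  refine tsum_of_norm_bounded (EllOne.hasSum_norm C) fun i => ?_
  rw [norm_smul]
  exact mul_le_of_le_one_right (norm_nonneg _) (hv i)

variable [CompleteSpace E]

lemma hasSum_smul (hv : ∀ i, ‖v i‖ ≤ 1) (C : EllOne M) :
    HasSum (fun i => C i • v i) (∑' i, C i • v i) := by
  refine ((EllOne.hasSum_norm C).summable.of_norm_bounded fun i => ?_).hasSum
  rw [norm_smul]
  exact mul_le_of_le_one_right (norm_nonneg _) (hv i)

/-- The contraction `C ↦ ∑ C_i v_i` defined by a family `v` in the unit ball: `ℓ¹(M)` is the free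
Banach space on `M`. -/
def lift (v : M → E) (hv : ∀ i, ‖v i‖ ≤ 1) : EllOne M →L[ℂ] E :=
  LinearMap.mkContinuous
    { toFun := fun C => ∑' i, C i • v i
      map_add' := fun C D => by
        simpa [add_smul] using ((hasSum_smul hv C).add (hasSum_smul hv D)).tsum_eq
      map_smul' := fun k C => by
        simpa [mul_smul] using ((hasSum_smul hv C).const_smul k).tsum_eq }
    1 fun C => by simpa using norm_tsum_smul_le hv C

lemma lift_apply (hv : ∀ i, ‖v i‖ ≤ 1) (C : EllOne M) : lift v hv C = ∑' i, C i • v i := rfl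

lemma norm_lift_apply_le (hv : ∀ i, ‖v i‖ ≤ 1) (C : EllOne M) : ‖lift v hv C‖ ≤ ‖C‖ :=
  norm_tsum_smul_le hv C

lemma norm_lift_le (hv : ∀ i, ‖v i‖ ≤ 1) : ‖lift v hv‖ ≤ 1 :=
  LinearMap.mkContinuous_norm_le _ zero_le_one _

lemma lift_single [DecidableEq M] (hv : ∀ i, ‖v i‖ ≤ 1) (i : M) : lift v hv (single i) = v i := by
  rw [lift_apply, tsum_eq_single i fun k hk => by rw [single_apply_of_ne hk, zero_smul]]
  simp [single]

variable [DecidableEq M]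

section Remainder

variable [Preorder M]

/-- The sum of the monomials of a power series which `X^a` does not divide. -/
def modMonom (a : M) : EllOne M →L[ℂ] EllOne M :=
  lift ((Ici a)ᶜ.indicator single) fun i =>
    (norm_indicator_le_norm_self _ i).trans (norm_single _).le

lemma modMonom_apply_of_le {a k : M} (hak : a ≤ k) (C : EllOne M) : modMonom a C k = 0 := by
  suffices h : lp.evalCLM ℂ (fun _ : M => ℂ) 1 k ∘L modMonom a = 0 from DFunLike.congr_fun h C
  refine clm_ext fun i => ?_
  change modMonom a (single i) k = 0
  rw [modMonom, lift_single]
  by_cases hi : i ∈ (Ici a)ᶜ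
  · rw [indicator_of_mem hi, single_apply_of_ne]
    rintro rfl
    exact hi hak
  · rw [indicator_of_notMem hi]
    rfl

end Remainder

section Convolution

variable [AddCommMonoid M]

/-- Multiplication by `X^k`. -/
def shift (k : M) : EllOne M →L[ℂ] EllOne M :=
  lift (fun i => single (i + k)) fun _ => (norm_single _).le

/-- Multiplication of power series, as a continuous bilinear map. -/
def conv : EllOne M →L[ℂ] EllOne M →L[ℂ] EllOne M :=
  lift shift fun _ => norm_lift_le _

lemma conv_single (k : M) : conv (single k) = shift k :=
  lift_single _ k

lemma norm_conv_le (C : EllOne M) : ‖conv C‖ ≤ ‖C‖ :=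
  norm_lift_apply_le _ C

lemma lift_conv {v : M → ℂ} (hv : ∀ i, ‖v i‖ ≤ 1) (hadd : ∀ i k, v (i + k) = v i * v k)
    (C D : EllOne M) : lift v hv (conv C D) = lift v hv C * lift v hv D := by
  have hshift (k : M) : lift v hv ∘L shift k = v k • lift v hv := clm_ext fun i => by
    rw [ContinuousLinearMap.comp_apply, shift, lift_single, lift_single, hadd,
      smul_apply, lift_single, smul_eq_mul, mul_comm]
  have hconv : lift v hv ∘L conv.flip D = lift v hv D • lift v hv := clm_ext fun k => by
    rw [ContinuousLinearMap.comp_apply, ContinuousLinearMap.flip_apply, conv_single,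
      ← ContinuousLinearMap.comp_apply, hshift, smul_apply,
      smul_apply, lift_single, smul_eq_mul, smul_eq_mul, mul_comm]
  rw [mul_comm]
  exact DFunLike.congr_fun hconv C

variable [PartialOrder M] [Sub M]

/-- The quotient of a power series by `X^a`, dropping the monomials which `X^a` does not divide. -/
def divMonom (a : M) : EllOne M →L[ℂ] EllOne M :=
  lift ((Ici a).indicator fun i => single (i - a)) fun i =>
    (norm_indicator_le_norm_self _ i).trans (norm_single _).le

lemma exists_divMonom_sub_conv_eq_smul {a : M} {c : ℂ} (hc : c ≠ 0) {D : EllOne M}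
    (hD : ‖D‖ ≤ ‖c‖ / 2) (H : EllOne M) :
    ∃ Q : EllOne M, divMonom a (H - conv D Q) = c • Q ∧ ‖Q‖ ≤ 2 / ‖c‖ * ‖H‖ := by
  have hcontr : ‖c⁻¹ • (divMonom a ∘L conv D)‖ ≤ 1 / 2 := calc
    _ ≤ ‖c‖⁻¹ * (1 * (‖c‖ / 2)) := by
        rw [norm_smul, norm_inv]
        gcongr
        refine (ContinuousLinearMap.opNorm_comp_le _ _).trans ?_
        gcongr
        · exact norm_lift_le _
        · exact (norm_conv_le D).trans hD
    _ = 1 / 2 := by field_simp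
  obtain ⟨Q, hQ, hQ_norm⟩ := exists_add_apply_eq hcontr (c⁻¹ • divMonom a H)
  refine ⟨Q, ?_, ?_⟩
  · have h := congrArg (c • ·) hQ
    simp only [smul_apply, ContinuousLinearMap.comp_apply, smul_add, smul_inv_smul₀ hc] at h
    rw [map_sub, ← h, add_sub_cancel_right]
  · calc ‖Q‖ ≤ 2 * (‖c‖⁻¹ * ‖H‖) := by
          rw [norm_smul, norm_inv] at hQ_norm
          refine hQ_norm.trans ?_
          gcongr
          exact norm_lift_apply_le _ H
      _ = 2 / ‖c‖ * ‖H‖ := by ring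

variable [OrderedSub M] [ExistsAddOfLE M] [AddLeftMono M]

lemma shift_divMonom_add_modMonom (a : M) (C : EllOne M) :
    shift a (divMonom a C) + modMonom a C = C := by
  suffices h : shift a ∘L divMonom a + modMonom a = .id ℂ (EllOne M) from DFunLike.congr_fun h C
  refine clm_ext fun i => ?_
  change shift a (divMonom a (single i)) + modMonom a (single i) = single i
  rw [divMonom, modMonom, lift_single, lift_single]
  by_cases hi : a ≤ i
  · rw [indicator_of_mem (mem_Ici.2 hi), indicator_of_notMem (by simpa using hi), shift,
      lift_single, tsub_add_cancel_of_le hi, add_zero]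
  · rw [indicator_of_notMem (by simpa using hi), indicator_of_mem (by simpa using hi), map_zero,
      zero_add]

theorem exists_eq_conv_add {a : M} {c : ℂ} (hc : c ≠ 0) {P : EllOne M}
    (hP : ‖P - c • single a‖ ≤ ‖c‖ / 2) (H : EllOne M) :
    ∃ Q T : EllOne M, H = conv P Q + T ∧ (∀ k, a ≤ k → T k = 0) ∧
      ‖Q‖ ≤ 2 / ‖c‖ * ‖H‖ ∧ ‖T‖ ≤ 2 * ‖H‖ := by
  set D := P - c • single a with hD
  obtain ⟨Q, hQ, hQ_le⟩ := exists_divMonom_sub_conv_eq_smul hc hP H (a := a)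
  refine ⟨Q, modMonom a (H - conv D Q), ?_, fun k hk => modMonom_apply_of_le hk _, hQ_le, ?_⟩
  · have hPD : conv P Q = c • shift a Q + conv D Q := by
      rw [hD, map_sub, map_smul, conv_single]
      simp
    have hsplit := shift_divMonom_add_modMonom a (H - conv D Q)
    rw [hQ, map_smul] at hsplit
    rw [hPD, add_right_comm, hsplit, sub_add_cancel]
  · calc ‖modMonom a (H - conv D Q)‖ ≤ ‖H‖ + ‖conv D Q‖ :=
          (norm_lift_apply_le _ _).trans (norm_sub_le _ _)
      _ ≤ ‖H‖ + ‖c‖ / 2 * (2 / ‖c‖ * ‖H‖) := by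
          gcongr
          exact ContinuousLinearMap.le_of_opNorm_le_of_le _ ((norm_conv_le D).trans hP) hQ_le
      _ = 2 * ‖H‖ := by
          field_simp
          ring

end Convolution

end EllOne

end Division

section ScaledSeries

variable {d : ℕ} {w x : Fin d → ℂ}

/-- The closed polydisk with polyradius `(‖w₁‖, …, ‖w_d‖)`. -/
def closedPolydisk (w : Fin d → ℂ) : Set (Fin d → ℂ) :=
  {x | ∀ j, ‖x j‖ ≤ ‖w j‖}

/-- The sum of the power series `∑ C_α (x/w)^α`, which converges absolutely on `closedPolydisk w`;
rescaling the variables by `w` turns the weighted `ℓ¹` norm `∑ ‖c_α‖ ‖w^α‖` of the coefficients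
`c_α = C_α / w^α` into the norm of `C`. -/
def scaledSum (w : Fin d → ℂ) (C : EllOne (Fin d → ℕ)) (x : Fin d → ℂ) : ℂ :=
  ∑' α, C α * monom (x / w) α

lemma norm_monom_div_le_one (hx : x ∈ closedPolydisk w) (α : Fin d → ℕ) :
    ‖monom (x / w) α‖ ≤ 1 := by
  rw [norm_monom]
  refine Finset.prod_le_one (fun j _ => by positivity) fun j _ => pow_le_one₀ (norm_nonneg _) ?_
  beta_reduce
  rw [Pi.div_apply, norm_div]
  exact div_le_one_of_le₀ (hx j) (norm_nonneg _)

lemma scaledSum_eq_lift (hx : x ∈ closedPolydisk w) (C : EllOne (Fin d → ℕ)) :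
    scaledSum w C x = EllOne.lift (monom (x / w)) (norm_monom_div_le_one hx) C := rfl

lemma norm_scaledSum_le (hx : x ∈ closedPolydisk w) (C : EllOne (Fin d → ℕ)) :
    ‖scaledSum w C x‖ ≤ ‖C‖ :=
  EllOne.norm_lift_apply_le (norm_monom_div_le_one hx) C

lemma scaledSum_add (hx : x ∈ closedPolydisk w) (C D : EllOne (Fin d → ℕ)) :
    scaledSum w (C + D) x = scaledSum w C x + scaledSum w D x :=
  map_add (EllOne.lift (monom (x / w)) (norm_monom_div_le_one hx)) C D

lemma scaledSum_conv (hx : x ∈ closedPolydisk w) (C D : EllOne (Fin d → ℕ)) :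
    scaledSum w (EllOne.conv C D) x = scaledSum w C x * scaledSum w D x :=
  EllOne.lift_conv (norm_monom_div_le_one hx) (monom_add _) C D

lemma norm_scaledSum_sub_le (hx : x ∈ closedPolydisk w) (C : EllOne (Fin d → ℕ)) (c : ℂ)
    (a : Fin d → ℕ) :
    ‖scaledSum w C x - c * monom (x / w) a‖ ≤ ‖C - c • EllOne.single a‖ := by
  have h := norm_scaledSum_le hx (C - c • EllOne.single a)
  rwa [scaledSum_eq_lift hx, map_sub, map_smul, EllOne.lift_single] at h

lemma polydisk_subset_closedPolydisk {ρ : ℝ} (hρw : ∀ j, ρ ≤ ‖w j‖) :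
    polydisk d ρ ⊆ closedPolydisk w :=
  fun _ hx j => (hx j).le.trans (hρw j)

lemma hasMonomSeries_scaledSum {ρ : ℝ} (hρw : ∀ j, ρ ≤ ‖w j‖) (C : EllOne (Fin d → ℕ)) :
    HasMonomSeries (fun α => C α * monom w⁻¹ α) (scaledSum w C) ρ := by
  intro x hx
  refine (EllOne.hasSum_smul (norm_monom_div_le_one
    (polydisk_subset_closedPolydisk hρw hx)) C).congr_fun fun α => ?_
  rw [smul_eq_mul, div_eq_mul_inv, mul_monom, mul_assoc, mul_comm (monom x α)]

lemma analyticOnNhd_scaledSum {ρ : ℝ} (hρ : 0 < ρ) (hρw : ∀ j, ρ ≤ ‖w j‖)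
    (C : EllOne (Fin d → ℕ)) : AnalyticOnNhd ℂ (scaledSum w C) (polydisk d ρ) :=
  (hasMonomSeries_scaledSum hρw C).analyticOnNhd hρ

lemma mixedPartial_scaledSum_eq_zero {ρ : ℝ} (hρ : 0 < ρ) (hρw : ∀ j, ρ ≤ ‖w j‖)
    {C : EllOne (Fin d → ℕ)} {β : Fin d → ℕ} (hβ : C β = 0) :
    mixedPartial β (scaledSum w C) 0 = 0 := by
  rw [(hasMonomSeries_scaledSum hρw C).mixedPartial_apply_zero_eq_zero_iff hρ, hβ, zero_mul]

lemma mul_div_eq_of_mem_closedPolydisk (hx : x ∈ closedPolydisk w) : w * (x / w) = x := by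
  ext j
  refine mul_div_cancel_of_imp' fun hj => norm_le_zero_iff.1 ?_
  simpa [hj] using hx j

lemma norm_mul_monom_le_mul_half {c : (Fin d → ℕ) → ℂ} {M r : ℝ} (hr : 0 < r)
    (hc : ∀ α, ‖c α‖ ≤ M * monom (fun _ => r⁻¹) α) {u : Fin d → ℝ} (hu₀ : ∀ j, 0 ≤ u j)
    (hu : ∀ j, u j ≤ r / 2) (α : Fin d → ℕ) :
    ‖c α‖ * monom u α ≤ M * monom (fun _ => 1 / 2) α := by
  have hM : 0 ≤ M := by simpa [monom_zero_right] using (norm_nonneg _).trans (hc 0)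
  have hnonneg : 0 ≤ monom (fun _ : Fin d => r⁻¹) α := monom_nonneg (fun _ => by positivity) α
  calc ‖c α‖ * monom u α ≤ M * monom (fun _ => r⁻¹) α * monom (fun _ => r / 2) α :=
        mul_le_mul (hc α) (monom_le_monom hu₀ hu α) (monom_nonneg hu₀ α) (by positivity)
    _ = M * monom (fun _ => 1 / 2) α := by
        rw [mul_assoc, ← mul_monom]
        congr 2
        ext j
        change r⁻¹ * (r / 2) = 1 / 2
        field_simp

lemma summable_monom_half (d : ℕ) : Summable (monom fun _ : Fin d => (1 / 2 : ℝ)) :=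
  summable_monom (fun _ => by norm_num) fun _ => by norm_num

lemma HasMonomSeries.exists_eqOn_scaledSum {c : (Fin d → ℕ) → ℂ} {f : (Fin d → ℂ) → ℂ} {M r : ℝ}
    (hr : 0 < r) (hf : HasMonomSeries c f r) (hc : ∀ α, ‖c α‖ ≤ M * monom (fun _ => r⁻¹) α)
    (hw : ∀ j, ‖w j‖ ≤ r / 2) :
    ∃ C : EllOne (Fin d → ℕ), (∀ α, C α = c α * monom w α) ∧
      ‖C‖ ≤ M * ∑' α, monom (fun _ : Fin d => (1 / 2 : ℝ)) α ∧
      EqOn f (scaledSum w C) (closedPolydisk w) := by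
  have hbound (α : Fin d → ℕ) : ‖c α * monom w α‖ ≤ M * monom (fun _ => 1 / 2) α := by
    rw [norm_mul, norm_monom]
    exact norm_mul_monom_le_mul_half hr hc (fun _ => norm_nonneg _) hw α
  have hgeom := (summable_monom_half d).mul_left M
  obtain ⟨C, hC⟩ := EllOne.exists_coe_eq (c := fun α => c α * monom w α)
    (hgeom.of_nonneg_of_le (fun _ => norm_nonneg _) hbound)
  refine ⟨C, congrFun hC, ?_, fun x hx => ?_⟩
  · rw [← tsum_mul_left, ← (EllOne.hasSum_norm C).tsum_eq, hC]
    exact (hC ▸ (EllOne.hasSum_norm C).summable).tsum_le_tsum hbound hgeom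
  · have hxr : x ∈ polydisk d r := fun j => ((hx j).trans (hw j)).trans_lt (half_lt_self hr)
    rw [← (hf x hxr).tsum_eq, scaledSum, hC]
    exact tsum_congr fun α => by rw [mul_assoc, ← mul_monom, mul_div_eq_of_mem_closedPolydisk hx]

end ScaledSeries

section Weights

lemma tendsto_exp_neg_mul_atTop {k : ℝ} (hk : 0 < k) :
    Tendsto (fun τ : ℝ => Real.exp (-τ * k)) atTop (𝓝 0) :=
  Real.tendsto_exp_atBot.comp (tendsto_neg_atTop_atBot.atBot_mul_const hk)

lemma tendsto_tsum_mul_exp_neg_atTop {ι : Type*} {b k : ι → ℝ} (hk : ∀ i, b i ≠ 0 → 0 < k i)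
    {τ₀ : ℝ} (hb : Summable fun i => |b i| * Real.exp (-τ₀ * k i)) :
    Tendsto (fun τ => ∑' i, b i * Real.exp (-τ * k i)) atTop (𝓝 0) := by
  rw [← tsum_zero (α := ℝ) (β := ι)]
  refine tendsto_tsum_of_dominated_convergence hb (fun i => ?_) ?_
  · by_cases hi : b i = 0
    · simp [hi]
    · simpa using (tendsto_exp_neg_mul_atTop (hk i hi)).const_mul (b i)
  · filter_upwards [eventually_ge_atTop τ₀] with τ hτ i
    rw [norm_mul, Real.norm_eq_abs, Real.norm_of_nonneg (Real.exp_nonneg _)]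
    by_cases hi : b i = 0
    · simp [hi]
    · have := hk i hi
      gcongr

lemma eventually_tsum_mul_exp_le {ι : Type*} {b L : ι → ℝ} {l₀ : ℝ} (hL : ∀ i, b i ≠ 0 → l₀ < L i)
    {τ₀ : ℝ} (hb : Summable fun i => |b i| * Real.exp (-τ₀ * L i)) {ε : ℝ} (hε : 0 < ε) :
    ∀ᶠ τ : ℝ in atTop, ∑' i, b i * Real.exp (-τ * L i) ≤ ε * Real.exp (-τ * l₀) := by
  have hsplit (τ : ℝ) (i : ι) :
      Real.exp (-τ * L i) = Real.exp (-τ * (L i - l₀)) * Real.exp (-τ * l₀) := by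
    rw [← Real.exp_add]
    ring_nf
  have hsummable : Summable fun i => |b i| * Real.exp (-τ₀ * (L i - l₀)) := by
    refine (summable_mul_right_iff (Real.exp_ne_zero (-τ₀ * l₀))).1 (hb.congr fun i => ?_)
    rw [hsplit τ₀ i, mul_assoc]
  have htendsto := tendsto_tsum_mul_exp_neg_atTop (fun i hi => sub_pos.2 (hL i hi)) hsummable
  filter_upwards [htendsto.eventually_lt_const hε] with τ hτ
  calc ∑' i, b i * Real.exp (-τ * L i)
      = (∑' i, b i * Real.exp (-τ * (L i - l₀))) * Real.exp (-τ * l₀) := by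
        rw [← tsum_mul_right]
        exact tsum_congr fun i => by rw [hsplit τ i, mul_assoc]
    _ ≤ ε * Real.exp (-τ * l₀) := by gcongr

variable {d : ℕ}

lemma monom_exp (τ : ℝ) (ℓ : Fin d → ℝ) (β : Fin d → ℕ) :
    monom (fun j => Real.exp (-τ * ℓ j)) β = Real.exp (-τ * ∑ j, ℓ j * β j) := by
  rw [monom, Finset.mul_sum, Real.exp_sum]
  exact Finset.prod_congr rfl fun j _ => by
    rw [← Real.exp_nat_mul]
    ring_nf

/-- On `closedPolydisk w`, `P` is the sum of a power series in which the monomial of exponent `a`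
has at least twice the weighted norm of all the other monomials together. -/
def IsDominatedAt (w : Fin d → ℂ) (a : Fin d → ℕ) (P : (Fin d → ℂ) → ℂ) : Prop :=
  ∃ (C : EllOne (Fin d → ℕ)) (c : ℂ), c ≠ 0 ∧ ‖C - c • EllOne.single a‖ ≤ ‖c‖ / 2 ∧
    EqOn P (scaledSum w C) (closedPolydisk w)

variable {ℓ : Fin d → ℝ} {a : Fin d → ℕ} {c : (Fin d → ℕ) → ℂ} {M r : ℝ}

lemma eventually_exp_neg_mul_lt (hℓ : ∀ j, 0 < ℓ j) {δ : ℝ} (hδ : 0 < δ) :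
    ∀ᶠ τ : ℝ in atTop, ∀ j, Real.exp (-τ * ℓ j) < δ :=
  eventually_all.2 fun j => (tendsto_exp_neg_mul_atTop (hℓ j)).eventually_lt_const hδ

lemma eventually_tsum_update_mul_monom_exp_le (hℓ : ∀ j, 0 < ℓ j) (hr : 0 < r)
    (hc : ∀ α, ‖c α‖ ≤ M * monom (fun _ => r⁻¹) α) (ha : c a ≠ 0)
    (hmin : ∀ β, c β ≠ 0 → β ≠ a → ∑ j, ℓ j * (a j : ℝ) < ∑ j, ℓ j * (β j : ℝ)) :
    ∀ᶠ τ : ℝ in atTop, ∑' β, ‖Function.update c a 0 β‖ * monom (fun j => Real.exp (-τ * ℓ j)) β ≤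
      ‖c a‖ / 2 * monom (fun j => Real.exp (-τ * ℓ j)) a := by
  simp only [monom_exp]
  have hgap (β : Fin d → ℕ) (hβ : ‖Function.update c a 0 β‖ ≠ 0) :
      ∑ j, ℓ j * (a j : ℝ) < ∑ j, ℓ j * (β j : ℝ) := by
    rcases eq_or_ne β a with rfl | hne
    · simp at hβ
    · rw [Function.update_of_ne hne] at hβ
      exact hmin β (norm_ne_zero_iff.1 hβ) hne
  obtain ⟨τ₀, hτ₀⟩ := (eventually_exp_neg_mul_lt hℓ (half_pos hr)).exists
  refine eventually_tsum_mul_exp_le hgap (τ₀ := τ₀) ?_ (half_pos (norm_pos_iff.2 ha))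
  refine ((summable_monom_half d).mul_left M).of_nonneg_of_le (fun β => by positivity) fun β => ?_
  calc |‖Function.update c a 0 β‖| * Real.exp (-τ₀ * ∑ j, ℓ j * (β j : ℝ))
      ≤ ‖c β‖ * monom (fun j => Real.exp (-τ₀ * ℓ j)) β := by
        rw [abs_norm, monom_exp]
        gcongr
        rcases eq_or_ne β a with rfl | hne <;> simp [*]
    _ ≤ M * monom (fun _ => 1 / 2) β :=
        norm_mul_monom_le_mul_half hr hc (fun _ => Real.exp_nonneg _) (fun j => (hτ₀ j).le) β

lemma norm_sub_smul_single_eq {C : EllOne (Fin d → ℕ)} {w : Fin d → ℂ}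
    (hC : ∀ α, C α = c α * monom w α) (a : Fin d → ℕ) :
    ‖C - C a • EllOne.single a‖ =
      ∑' β, ‖Function.update c a 0 β‖ * monom (fun j => ‖w j‖) β := by
  rw [← (EllOne.hasSum_norm _).tsum_eq]
  refine tsum_congr fun β => ?_
  change ‖C β - C a * EllOne.single a β‖ = _
  rcases eq_or_ne β a with rfl | hne
  · simp [EllOne.single]
  · rw [EllOne.single_apply_of_ne hne, mul_zero, sub_zero, hC, norm_mul, norm_monom,
      Function.update_of_ne hne]

theorem HasMonomSeries.exists_isDominatedAt {P : (Fin d → ℂ) → ℂ} (hr : 0 < r)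
    (hP : HasMonomSeries c P r) (hc : ∀ α, ‖c α‖ ≤ M * monom (fun _ => r⁻¹) α)
    (hℓ : ∀ j, 0 < ℓ j) (ha : c a ≠ 0)
    (hmin : ∀ β, c β ≠ 0 → β ≠ a → ∑ j, ℓ j * (a j : ℝ) < ∑ j, ℓ j * (β j : ℝ))
    {δ : ℝ} (hδ : 0 < δ) :
    ∃ w : Fin d → ℂ, (∀ j, w j ≠ 0) ∧ (∀ j, ‖w j‖ < δ) ∧ IsDominatedAt w a P := by
  obtain ⟨τ, hτ, hτδ, hτr⟩ := ((eventually_tsum_update_mul_monom_exp_le hℓ hr hc ha hmin).and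
    ((eventually_exp_neg_mul_lt hℓ hδ).and (eventually_exp_neg_mul_lt hℓ (half_pos hr)))).exists
  let w : Fin d → ℂ := fun j => (Real.exp (-τ * ℓ j) : ℝ)
  have hw_norm (j : Fin d) : ‖w j‖ = Real.exp (-τ * ℓ j) :=
    (Complex.norm_real _).trans (Real.norm_of_nonneg (Real.exp_nonneg _))
  have hw (j : Fin d) : w j ≠ 0 := norm_ne_zero_iff.1 (hw_norm j ▸ Real.exp_ne_zero _)
  obtain ⟨C, hC, -, hPC⟩ := hP.exists_eqOn_scaledSum hr hc fun j => (hw_norm j).trans_le (hτr j).le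
  refine ⟨w, hw, fun j => (hw_norm j).trans_lt (hτδ j), C, C a, ?_, ?_, hPC⟩
  · rw [hC]
    exact mul_ne_zero ha (monom_ne_zero hw a)
  · simp only [← hw_norm] at hτ
    rwa [norm_sub_smul_single_eq hC, hC a, norm_mul, norm_monom, mul_div_right_comm]

end Weights

namespace IsDominatedAt

variable {d : ℕ} {w : Fin d → ℂ} {a : Fin d → ℕ} {P : (Fin d → ℂ) → ℂ}

lemma exists_le_norm_smul (hP : IsDominatedAt w a P) (hw : ∀ j, w j ≠ 0) :
    ∃ m > 0, ∀ ζ : ℂ, ‖ζ‖ = 1 → m ≤ ‖P (ζ • w)‖ := by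
  obtain ⟨C, c, hc, hCc, hPC⟩ := hP
  refine ⟨‖c‖ / 2, half_pos (norm_pos_iff.2 hc), fun ζ hζ => ?_⟩
  have hmem : ζ • w ∈ closedPolydisk w := fun j => by simp [hζ]
  have hmonom : ‖c * monom (ζ • w / w) a‖ = ‖c‖ := by
    rw [norm_mul, norm_monom]
    simp [monom, hζ, hw]
  have hle := (norm_scaledSum_sub_le hmem C c a).trans hCc
  have hsub := norm_sub_norm_le (c * monom (ζ • w / w) a) (scaledSum w C (ζ • w))
  rw [norm_sub_rev, hmonom] at hsub
  rw [hPC hmem]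
  linarith

lemma exists_division (hP : IsDominatedAt w a P) :
    ∃ B > 0, ∀ H : EllOne (Fin d → ℕ), ∃ Q T : EllOne (Fin d → ℕ),
      (∀ x ∈ closedPolydisk w, scaledSum w H x = P x * scaledSum w Q x + scaledSum w T x) ∧
      (∀ β, a ≤ β → T β = 0) ∧ ‖Q‖ ≤ B * ‖H‖ ∧ ‖T‖ ≤ B * ‖H‖ := by
  obtain ⟨C, c, hc, hCc, hPC⟩ := hP
  refine ⟨max (2 / ‖c‖) 2, by positivity, fun H => ?_⟩
  obtain ⟨Q, T, hH, hT, hQ_le, hT_le⟩ := EllOne.exists_eq_conv_add hc hCc H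
  refine ⟨Q, T, fun x hx => ?_, hT, hQ_le.trans ?_, hT_le.trans ?_⟩
  · rw [hH, scaledSum_add hx, scaledSum_conv hx, hPC hx]
  · gcongr
    exact le_max_left _ _
  · gcongr
    exact le_max_right _ _

end IsDominatedAt

section OneVariable

variable {p q h k g : ℂ → ℂ} {t₀ c : ℂ} {r C : ℝ} {S U : Set ℂ}

lemma zero_le_meromorphicOrderAt_of_frequently_norm_le
    (h : ∃ᶠ t in 𝓝[≠] t₀, ‖g t‖ ≤ C) : 0 ≤ meromorphicOrderAt g t₀ := by
  by_contra! hneg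
  have htend : Tendsto (fun t => ‖g t‖) (𝓝[≠] t₀) atTop :=
    tendsto_norm_atTop_iff_cobounded.2 (tendsto_cobounded_of_meromorphicOrderAt_neg hneg)
  exact h ((htend.eventually_gt_atTop C).mono fun t ht => ht.not_ge)

lemma frequently_nhdsNE_mem_of_analyticAt (hp : AnalyticAt ℂ p t₀)
    (hconst : ¬ ∀ᶠ t in 𝓝 t₀, p t = p t₀) (hS : ∃ᶠ z in 𝓝[≠] (p t₀), z ∈ S) :
    ∃ᶠ t in 𝓝[≠] t₀, p t ∈ S := by
  have hmap : 𝓝 (p t₀) ≤ map p (𝓝 t₀) :=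
    hp.eventually_constant_or_nhds_le_map_nhds.resolve_left hconst
  rw [frequently_nhdsWithin_iff] at hS ⊢
  exact (frequently_map.1 (hS.filter_mono hmap)).mono fun t ht =>
    ⟨ht.1, fun h => ht.2 (congrArg p h)⟩

lemma exists_analyticOnNhd_eq_mul (hq : AnalyticOnNhd ℂ q U) (hh : AnalyticOnNhd ℂ h U)
    (hne : ∀ t ∈ U, ∀ᶠ z in 𝓝[≠] t, q z ≠ 0)
    (hle : ∀ t ∈ U, q t = 0 → ∃ᶠ z in 𝓝[≠] t, ‖h z‖ ≤ C * ‖q z‖) :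
    ∃ k, AnalyticOnNhd ℂ k U ∧ ∀ t ∈ U, h t = q t * k t := by
  have hmero : MeromorphicOn (h / q) U := fun t ht =>
    (hh t ht).meromorphicAt.div (hq t ht).meromorphicAt
  have horder : ∀ t ∈ U, 0 ≤ meromorphicOrderAt (h / q) t := by
    intro t ht
    by_cases hqt : q t = 0
    · refine zero_le_meromorphicOrderAt_of_frequently_norm_le (C := C) ?_
      refine ((hle t ht hqt).and_eventually (hne t ht)).mono fun z ⟨hz, hqz⟩ => ?_
      rwa [Pi.div_apply, norm_div, div_le_iff₀ (norm_pos_iff.2 hqz)]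
    · exact ((hh t ht).div (hq t ht) hqt).meromorphicOrderAt_nonneg
  have hanalytic : AnalyticOnNhd ℂ (toMeromorphicNFOn (h / q) U) U := fun t ht => by
    rw [← (meromorphicNFOn_toMeromorphicNFOn (h / q) U ht).meromorphicOrderAt_nonneg_iff_analyticAt,
      meromorphicOrderAt_toMeromorphicNFOn hmero ht]
    exact horder t ht
  refine ⟨_, hanalytic, fun t ht => ?_⟩
  have heq : ∀ᶠ z in 𝓝[≠] t, h z = q z * toMeromorphicNFOn (h / q) U z := by
    filter_upwards [hmero.toMeromorphicNFOn_eq_self_on_nhdsNE ht, hne t ht] with z hz hqz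
    rw [hz, Pi.div_apply, mul_div_cancel₀ _ hqz]
  have hlim := ((hq t ht).continuousAt.mul (hanalytic t ht).continuousAt).tendsto
  exact tendsto_nhds_unique
    (((hh t ht).continuousAt.tendsto.mono_left nhdsWithin_le_nhds).congr' heq)
    (hlim.mono_left nhdsWithin_le_nhds)

lemma eventually_nhdsNE_ne_zero_of_isPreconnected (hq : AnalyticOnNhd ℂ q U)
    (hU : IsPreconnected U) (hne : ∃ z ∈ U, q z ≠ 0) (ht₀ : t₀ ∈ U) :
    ∀ᶠ z in 𝓝[≠] t₀, q z ≠ 0 := by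
  obtain ⟨z, hz, hqz⟩ := hne
  refine (hq t₀ ht₀).eventually_eq_zero_or_eventually_ne_zero.resolve_left fun hzero => hqz ?_
  exact hq.eqOn_zero_of_preconnected_of_eventuallyEq_zero hU ht₀ hzero hz

lemma eq_mul_circleAverage_div (hk : AnalyticOnNhd ℂ k (closedBall c |r|))
    (hhqk : ∀ z ∈ closedBall c |r|, h z = q z * k z) (hq : ∀ z ∈ sphere c |r|, q z ≠ 0) :
    h c = q c * Real.circleAverage (fun z => h z / q z) c r := by
  have hcongr : Real.circleAverage (fun z => h z / q z) c r = Real.circleAverage k c r :=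
    Real.circleAverage_congr_sphere fun z hz => by
      simp only [hhqk z (sphere_subset_closedBall hz), mul_div_cancel_left₀ _ (hq z hz)]
  have hmean : Real.circleAverage k c r = k c :=
    circleAverage_of_differentiable_on_off_countable countable_empty hk.continuousOn
      fun z hz => (hk z (ball_subset_closedBall hz.1)).differentiableAt
  rw [hcongr, hmean, hhqk c (mem_closedBall_self (abs_nonneg r))]

lemma eq_pow_mul_circleAverage_div_pow (hp : AnalyticOnNhd ℂ p (closedBall c |r|))
    (hh : AnalyticOnNhd ℂ h (closedBall c |r|)) (hne : ∀ z ∈ sphere c |r|, p z ≠ 0) {N : ℕ}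
    (hle : ∀ t ∈ closedBall c |r|, p t = 0 → ∃ᶠ z in 𝓝[≠] t, ‖h z‖ ≤ C * ‖p z‖ ^ N) :
    h c = p c ^ N * Real.circleAverage (fun z => h z / p z ^ N) c r := by
  have hsphere := circleMap_mem_sphere' c r 0
  have hev : ∀ t ∈ closedBall c |r|, ∀ᶠ z in 𝓝[≠] t, p z ≠ 0 := fun t ht =>
    eventually_nhdsNE_ne_zero_of_isPreconnected hp (convex_closedBall c |r|).isPreconnected
      ⟨_, sphere_subset_closedBall hsphere, hne _ hsphere⟩ ht
  obtain ⟨k, hk, hhk⟩ := exists_analyticOnNhd_eq_mul (C := C) (hp.fun_pow N) hh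
    (fun t ht => (hev t ht).mono fun z hz => pow_ne_zero N hz) fun t ht hpt => by
      simpa only [norm_pow] using hle t ht (eq_zero_of_pow_eq_zero hpt)
  exact eq_mul_circleAverage_div hk hhk fun z hz => pow_ne_zero N (hne z hz)

end OneVariable

/-- The open angular sector `θ₁ < arg z < θ₂` with its vertex removed, so that
`x ∈ PSector d P θ₁ θ₂ r` says `P x ∈ argSector θ₁ θ₂` and `0 < ‖x j‖ < r` for all `j`. -/
def argSector (θ₁ θ₂ : ℝ) : Set ℂ :=
  {z | z ≠ 0 ∧ ∃ θ ∈ Ioo θ₁ θ₂, z = (‖z‖ : ℂ) * exp (θ * I)}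

lemma frequently_nhdsNE_zero_mem_argSector {θ₁ θ₂ : ℝ} (hθ : θ₁ < θ₂) :
    ∃ᶠ z in 𝓝[≠] (0 : ℂ), z ∈ argSector θ₁ θ₂ := by
  obtain ⟨θ, hθ⟩ := nonempty_Ioo.2 hθ
  have hnorm : ∀ ε : ℝ, 0 < ε → ‖(ε : ℂ) * exp (θ * I)‖ = ε := fun ε hε => by
    rw [norm_mul, norm_exp_ofReal_mul_I, mul_one, norm_real, Real.norm_of_nonneg hε.le]
  have htend : Tendsto (fun ε : ℝ => (ε : ℂ) * exp (θ * I)) (𝓝[>] 0) (𝓝[≠] 0) := by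
    refine tendsto_nhdsWithin_iff.2 ⟨?_, ?_⟩
    · have hcont : Continuous fun ε : ℝ => (ε : ℂ) * exp (θ * I) := by fun_prop
      simpa using (hcont.tendsto 0).mono_left nhdsWithin_le_nhds
    · filter_upwards [self_mem_nhdsWithin] with ε hε
      exact norm_pos_iff.1 ((hnorm ε hε).symm ▸ hε)
  refine htend.frequently (Eventually.frequently ?_)
  filter_upwards [self_mem_nhdsWithin] with ε hε
  exact ⟨norm_pos_iff.1 ((hnorm ε hε).symm ▸ hε), θ, hθ, by rw [hnorm ε hε]⟩

section Lines

variable {d : ℕ} {P h : (Fin d → ℂ) → ℂ} {v x : Fin d → ℂ} {ρ ρ' m : ℝ}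

lemma eventually_nhdsNE_add_smul_apply_ne_zero (hv : ∀ j, v j ≠ 0) (x : Fin d → ℂ) (t₀ : ℂ) :
    ∀ᶠ t in 𝓝[≠] t₀, ∀ j, (x + t • v) j ≠ 0 := by
  refine eventually_all.2 fun j => ?_
  have hroot : ∀ t, (x + t • v) j = 0 → t = -x j / v j := fun t ht => by
    rw [eq_div_iff (hv j)]
    exact eq_neg_of_add_eq_zero_right ht
  have hev : ∀ᶠ t in 𝓝[≠] t₀, t ≠ -x j / v j := by
    rcases eq_or_ne t₀ (-x j / v j) with heq | hne
    · exact heq ▸ self_mem_nhdsWithin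
    · exact eventually_ne_nhdsWithin hne
  exact hev.mono fun t ht h => ht (hroot t h)

/-- The direction `v` is transverse to the zero set of `P`: every unit disk `{x + ζ v : ‖ζ‖ ≤ 1}`
centred in the polydisk of radius `ρ'` stays in that of radius `ρ`, and `‖P‖ ≥ m` on its boundary
circle. No coordinate of `v` vanishes, so these disks are not contained in a coordinate
hyperplane. -/
structure IsTransverse (P : (Fin d → ℂ) → ℂ) (v : Fin d → ℂ) (ρ' ρ m : ℝ) : Prop where
  ne_zero : ∀ j, v j ≠ 0
  add_smul_mem : ∀ x ∈ polydisk d ρ', ∀ ζ : ℂ, ‖ζ‖ ≤ 1 → x + ζ • v ∈ polydisk d ρ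
  pos : 0 < m
  le_norm : ∀ x ∈ polydisk d ρ', ∀ ζ : ℂ, ‖ζ‖ = 1 → m ≤ ‖P (x + ζ • v)‖

namespace IsTransverse

lemma analyticOnNhd_line (hv : IsTransverse P v ρ' ρ m) (hh : AnalyticOnNhd ℂ h (polydisk d ρ))
    (hx : x ∈ polydisk d ρ') : AnalyticOnNhd ℂ (fun ζ : ℂ => h (x + ζ • v)) (closedBall 0 |1|) :=
  fun ζ hζ => (hh _ (hv.add_smul_mem x hx ζ (by simpa using hζ))).fun_comp
    (f := fun ζ : ℂ => x + ζ • v) (by fun_prop)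

lemma analyticOnNhd_translate (hv : IsTransverse P v ρ' ρ m)
    (hh : AnalyticOnNhd ℂ h (polydisk d ρ)) {ζ : ℂ} (hζ : ‖ζ‖ ≤ 1) :
    AnalyticOnNhd ℂ (fun x => h (x + ζ • v)) (polydisk d ρ') :=
  fun x hx => (hh _ (hv.add_smul_mem x hx ζ hζ)).fun_comp (f := fun x => x + ζ • v) (by fun_prop)

lemma line_ne_zero (hv : IsTransverse P v ρ' ρ m) (hx : x ∈ polydisk d ρ') {ζ : ℂ}
    (hζ : ‖ζ‖ = 1) : P (x + ζ • v) ≠ 0 :=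
  norm_pos_iff.1 (hv.pos.trans_le (hv.le_norm x hx ζ hζ))

lemma frequently_norm_le_line (hv : IsTransverse P v ρ' ρ m)
    (hP : AnalyticOnNhd ℂ P (polydisk d ρ)) {S : Set ℂ} (hS : ∃ᶠ z in 𝓝[≠] 0, z ∈ S) {b : ℝ → ℝ}
    (hle : ∀ x ∈ polydisk d ρ, (∀ j, x j ≠ 0) → P x ∈ S → ‖h x‖ ≤ b ‖P x‖)
    (hx : x ∈ polydisk d ρ') {t : ℂ} (ht : t ∈ closedBall 0 |1|) (hPt : P (x + t • v) = 0) :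
    ∃ᶠ ζ in 𝓝[≠] t, ‖h (x + ζ • v)‖ ≤ b ‖P (x + ζ • v)‖ := by
  have hline := hv.analyticOnNhd_line hP hx
  have hnonconst : ¬ ∀ᶠ ζ in 𝓝 t, P (x + ζ • v) = P (x + t • v) := by
    have hne := eventually_nhdsNE_ne_zero_of_isPreconnected hline
      (convex_closedBall _ _).isPreconnected ⟨1, by simp, hv.line_ne_zero hx (by simp)⟩ ht
    intro hzero
    obtain ⟨ζ, hζ, hζ'⟩ := ((hzero.filter_mono nhdsWithin_le_nhds).and hne).exists
    exact hζ' (hζ.trans hPt)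
  have hfreq := frequently_nhdsNE_mem_of_analyticAt (hline t ht) hnonconst (by rwa [hPt])
  have hmem : ∀ᶠ ζ in 𝓝[≠] t, x + ζ • v ∈ polydisk d ρ :=
    nhdsWithin_le_nhds ((show Continuous fun ζ : ℂ => x + ζ • v by fun_prop).continuousAt
      (isOpen_polydisk.mem_nhds (hv.add_smul_mem x hx t (by simpa using ht))))
  refine (hfreq.and_eventually
    (hmem.and (eventually_nhdsNE_add_smul_apply_ne_zero hv.ne_zero x t))).mono ?_
  exact fun ζ ⟨hζS, hζ, hζ0⟩ => hle _ hζ hζ0 hζS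

lemma exists_eq_pow_mul (hv : IsTransverse P v ρ' ρ m) (hP : AnalyticOnNhd ℂ P (polydisk d ρ))
    (hh : AnalyticOnNhd ℂ h (polydisk d ρ)) {M : ℝ} (hM : ∀ x ∈ polydisk d ρ, ‖h x‖ ≤ M)
    {S : Set ℂ} (hS : ∃ᶠ z in 𝓝[≠] 0, z ∈ S) {C : ℝ} {N : ℕ}
    (hle : ∀ x ∈ polydisk d ρ, (∀ j, x j ≠ 0) → P x ∈ S → ‖h x‖ ≤ C * ‖P x‖ ^ N) :
    ∃ q, SeparatelyHolomorphic d ρ' q ∧ (∀ x ∈ polydisk d ρ', ‖q x‖ ≤ M / m ^ N) ∧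
      ∀ x ∈ polydisk d ρ', h x = P x ^ N * q x := by
  have hm := hv.pos
  have hsphere : ∀ ζ ∈ sphere (0 : ℂ) |1|, ‖ζ‖ = 1 := fun ζ hζ => by simpa using hζ
  have hbound : ∀ x ∈ polydisk d ρ', ∀ ζ ∈ sphere (0 : ℂ) |1|,
      ‖h (x + ζ • v) / P (x + ζ • v) ^ N‖ ≤ M / m ^ N := by
    intro x hx ζ hζ
    have hhM := hM _ (hv.add_smul_mem x hx ζ (hsphere ζ hζ).le)
    have hM0 : 0 ≤ M := (norm_nonneg _).trans hhM
    have hPm := hv.le_norm x hx ζ (hsphere ζ hζ)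
    rw [norm_div, norm_pow]
    gcongr
  refine ⟨fun x => Real.circleAverage (fun ζ => h (x + ζ • v) / P (x + ζ • v) ^ N) 0 1,
    .circleAverage (fun ζ hζ => .of_analyticOnNhd fun x hx => ?_) (fun x hx ζ hζ => ?_) hbound,
    fun x hx => norm_circleAverage_le_of_norm_le (hbound x hx), fun x hx => ?_⟩
  · have hζ' := hsphere ζ hζ
    exact (hv.analyticOnNhd_translate hh hζ'.le x hx).fun_div
      ((hv.analyticOnNhd_translate hP hζ'.le x hx).fun_pow N)
      (pow_ne_zero N (hv.line_ne_zero hx hζ'))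
  · have hζ' := sphere_subset_closedBall hζ
    exact ((hv.analyticOnNhd_line hh hx ζ hζ').fun_div
      ((hv.analyticOnNhd_line hP hx ζ hζ').fun_pow N)
      (pow_ne_zero N (hv.line_ne_zero hx (hsphere ζ hζ)))).continuousAt.continuousWithinAt
  · have hcenter := eq_pow_mul_circleAverage_div_pow (hv.analyticOnNhd_line hP hx)
      (hv.analyticOnNhd_line hh hx) (fun ζ hζ => hv.line_ne_zero hx (hsphere ζ hζ))
      fun t ht hPt => hv.frequently_norm_le_line (b := fun y => C * y ^ N) hP hS hle hx ht hPt
    simpa only [zero_smul, add_zero] using hcenter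

end IsTransverse

lemma add_smul_mem_polydisk (hx : x ∈ polydisk d (ρ / 2)) (hv : ∀ j, ‖v j‖ ≤ ρ / 2) {ζ : ℂ}
    (hζ : ‖ζ‖ ≤ 1) : x + ζ • v ∈ polydisk d ρ := fun j =>
  calc ‖x j + ζ * v j‖ ≤ ‖x j‖ + ‖ζ * v j‖ := norm_add_le _ _
    _ = ‖x j‖ + ‖ζ‖ * ‖v j‖ := by rw [norm_mul]
    _ ≤ ‖x j‖ + 1 * (ρ / 2) := by gcongr; exact hv j
    _ < ρ := by linarith [hx j]

lemma exists_isTransverse (hρ : 0 < ρ) (hP : AnalyticOnNhd ℂ P (polydisk d ρ))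
    (hv0 : ∀ j, v j ≠ 0) (hvρ : ∀ j, ‖v j‖ ≤ ρ / 2) (hm : 0 < m)
    (hle : ∀ ζ : ℂ, ‖ζ‖ = 1 → m ≤ ‖P (ζ • v)‖) :
    ∃ ρ' > 0, ρ' ≤ ρ ∧ IsTransverse P v ρ' ρ (m / 2) := by
  have hev : ∀ᶠ x in 𝓝 (0 : Fin d → ℂ), ∀ ζ ∈ sphere (0 : ℂ) 1, m / 2 < ‖P (x + ζ • v)‖ := by
    refine (isCompact_sphere _ _).eventually_forall_of_forall_eventually fun ζ hζ => ?_
    have hζ1 : ‖ζ‖ = 1 := mem_sphere_zero_iff_norm.1 hζ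
    have hmem := add_smul_mem_polydisk (x := 0) (fun j => by simpa using hρ) hvρ hζ1.le
    have hcont : ContinuousAt (fun z : (Fin d → ℂ) × ℂ => ‖P (z.1 + z.2 • v)‖) (0, ζ) :=
      ((hP _ hmem).continuousAt.comp' (f := fun z : (Fin d → ℂ) × ℂ => z.1 + z.2 • v)
        (by fun_prop)).norm
    refine hcont.eventually (lt_mem_nhds ?_)
    simp only [zero_add]
    linarith [hle ζ hζ1]
  obtain ⟨ε, hε, hball⟩ := eventually_nhds_iff_ball.1 hev
  refine ⟨min ε (ρ / 2), by positivity, (min_le_right _ _).trans (half_le_self hρ.le), hv0,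
    fun x hx ζ hζ => ?_, half_pos hm, fun x hx ζ hζ => ?_⟩
  · exact add_smul_mem_polydisk (polydisk_subset_polydisk (min_le_right _ _) hx) hvρ hζ
  · have hxε := polydisk_subset_polydisk (min_le_left _ _) hx
    rw [polydisk_eq_ball hε] at hxε
    exact (hball x hxε ζ (mem_sphere_zero_iff_norm.2 hζ)).le

end Lines

section StandardForm

variable {d : ℕ} {P : (Fin d → ℂ) → ℂ} {a : Fin d → ℕ} {R : ℝ} {M : ℕ → ℝ}

lemma exists_forall_polydisk_norm_le (hP : ContinuousAt P 0) (hR : 0 < R) :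
    ∃ r > 0, r ≤ R ∧ ∃ L, ∀ x ∈ polydisk d r, ‖P x‖ ≤ L := by
  obtain ⟨ε, hε, hball⟩ :=
    eventually_nhds_iff_ball.1 (hP.norm.eventually (gt_mem_nhds (lt_add_one ‖P 0‖)))
  refine ⟨min ε R, lt_min hε hR, min_le_right _ _, ‖P 0‖ + 1, fun x hx => (hball x ?_).le⟩
  rw [← polydisk_eq_ball hε]
  exact polydisk_subset_polydisk (min_le_left _ _) hx

lemma exists_pos_le_forall_le_norm {w : Fin d → ℂ} (hw : ∀ j, w j ≠ 0) (hR : 0 < R) :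
    ∃ r > 0, r ≤ R ∧ ∀ j, r ≤ ‖w j‖ := by
  have hev : ∀ᶠ r in 𝓝[>] (0 : ℝ), ∀ j, r ≤ ‖w j‖ := eventually_all.2 fun j =>
    mem_of_superset (Ioc_mem_nhdsGT (norm_pos_iff.2 (hw j))) fun _ hr => hr.2
  obtain ⟨r, hrw, hr0, hrR⟩ := (hev.and (Ioc_mem_nhdsGT hR)).exists
  exact ⟨r, hr0, hrR, hrw⟩

lemma exists_isDominatedAt_of_mixedPartial {ℓ : Fin d → ℝ} (hℓ : ∀ j, 0 < ℓ j) (hR : 0 < R)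
    (hP : AnalyticOnNhd ℂ P (polydisk d R)) (ha : mixedPartial a P 0 ≠ 0)
    (hmin : ∀ β, mixedPartial β P 0 ≠ 0 → β ≠ a → ∑ j, ℓ j * (a j : ℝ) < ∑ j, ℓ j * (β j : ℝ))
    {δ : ℝ} (hδ : 0 < δ) :
    ∃ w : Fin d → ℂ, (∀ j, w j ≠ 0) ∧ (∀ j, ‖w j‖ < δ) ∧ IsDominatedAt w a P := by
  obtain ⟨r, hr, hrR, L, hL⟩ :=
    exists_forall_polydisk_norm_le (hP 0 fun j => by simpa using hR).continuousAt hR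
  obtain ⟨c, hc, hPc⟩ := SeparatelyHolomorphic.exists_hasMonomSeries (half_pos hr)
    (half_lt_self hr) (.of_analyticOnNhd (hP.mono (polydisk_subset_polydisk hrR))) hL
  have hcoeff (β : Fin d → ℕ) : mixedPartial β P 0 ≠ 0 ↔ c β ≠ 0 :=
    (hPc.mixedPartial_apply_zero_eq_zero_iff (half_pos hr) β).not
  exact hPc.exists_isDominatedAt (half_pos hr) hc hℓ ((hcoeff a).1 ha)
    (fun β hβ => hmin β ((hcoeff β).2 hβ)) hδ

lemma SeparatelyHolomorphic.exists_eqOn_scaledSum {h : (Fin d → ℂ) → ℂ} {ρ B : ℝ} {w : Fin d → ℂ}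
    (hρ : 0 < ρ) (hh : SeparatelyHolomorphic d ρ h) (hB : ∀ x ∈ polydisk d ρ, ‖h x‖ ≤ B)
    (hw : ∀ j, ‖w j‖ ≤ ρ / 4) :
    ∃ C, ‖C‖ ≤ (∑' α, monom (fun _ : Fin d => (1 / 2 : ℝ)) α) * B ∧
      EqOn h (scaledSum w C) (closedPolydisk w) := by
  obtain ⟨c, hc, hhc⟩ := hh.exists_hasMonomSeries (half_pos hρ) (half_lt_self hρ) hB
  obtain ⟨C, -, hC_le, hC⟩ := hhc.exists_eqOn_scaledSum (half_pos hρ) hc (w := w)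
    fun j => (hw j).trans_eq (by ring)
  exact ⟨C, hC_le.trans_eq (mul_comm _ _), hC⟩

lemma IsDominatedAt.exists_iterated_division {w : Fin d → ℂ} (hP : IsDominatedAt w a P)
    (hM : IsRegularWeight M) {Q : ℕ → EllOne (Fin d → ℕ)} (hQ : IsGeomBounded (‖Q ·‖) M)
    (t₀ : EllOne (Fin d → ℕ)) :
    ∃ t g : ℕ → EllOne (Fin d → ℕ), t 0 = t₀ ∧ IsGeomBounded (‖t ·‖) M ∧
      IsGeomBounded (‖g ·‖) M ∧ (∀ n β, a ≤ β → g n β = 0) ∧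
      ∀ n, ∀ x ∈ closedPolydisk w, scaledSum w (Q n) x + scaledSum w (t n) x =
        P x * scaledSum w (t (n + 1)) x + scaledSum w (g n) x := by
  obtain ⟨B, hB, hdiv⟩ := hP.exists_division
  choose quot rem hdiv hrem hquot_le hrem_le using hdiv
  let t : ℕ → EllOne (Fin d → ℕ) := fun n => Nat.rec t₀ (fun n tn => quot (Q n + tn)) n
  have hle (n : ℕ) : B * ‖Q n + t n‖ ≤ B * (‖Q n‖ + ‖t n‖) := by
    gcongr
    exact norm_add_le _ _
  have ht : IsGeomBounded (‖t ·‖) M :=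
    hQ.of_succ_le hM hB.le fun n => (hquot_le _).trans (hle n)
  refine ⟨t, fun n => rem (Q n + t n), rfl, ht, ?_, fun n => hrem _, fun n x hx => ?_⟩
  · exact ((hQ.add ht fun n => (hM.pos n).le).const_mul hB).mono
      fun n => (hrem_le _).trans (hle n)
  · rw [← scaledSum_add hx]
    exact hdiv _ x hx

lemma IsDominatedAt.exists_iterated_division_of_separatelyHolomorphic {w : Fin d → ℂ}
    (hP : IsDominatedAt w a P) (hM : IsRegularWeight M) {ρ : ℝ} (hρ : 0 < ρ)
    (hw : ∀ j, ‖w j‖ ≤ ρ / 4) {h : (Fin d → ℂ) → ℂ} {B : ℝ} (hh : SeparatelyHolomorphic d ρ h)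
    (hB : ∀ x ∈ polydisk d ρ, ‖h x‖ ≤ B) {q : ℕ → (Fin d → ℂ) → ℂ} {b : ℕ → ℝ}
    (hb : IsGeomBounded b M) (hq : ∀ n, SeparatelyHolomorphic d ρ (q n))
    (hqb : ∀ n, ∀ x ∈ polydisk d ρ, ‖q n x‖ ≤ b n) :
    ∃ t g : ℕ → EllOne (Fin d → ℕ), EqOn (scaledSum w (t 0)) h (closedPolydisk w) ∧
      IsGeomBounded (‖t ·‖) M ∧ IsGeomBounded (‖g ·‖) M ∧ (∀ n β, a ≤ β → g n β = 0) ∧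
      ∀ n, ∀ x ∈ closedPolydisk w, q n x + scaledSum w (t n) x =
        P x * scaledSum w (t (n + 1)) x + scaledSum w (g n) x := by
  obtain ⟨t₀, -, ht₀⟩ := hh.exists_eqOn_scaledSum hρ hB hw
  choose Q hQb hQ using fun n => (hq n).exists_eqOn_scaledSum hρ (hqb n) hw
  have hhalf : 0 < ∑' α, monom (fun _ : Fin d => (1 / 2 : ℝ)) α :=
    (summable_monom_half d).tsum_pos (fun α => monom_nonneg (fun _ => by positivity) α) 0
      (by simp [monom])
  obtain ⟨t, g, ht, ht_le, hg_le, hg, hdiv⟩ :=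
    hP.exists_iterated_division hM ((hb.const_mul hhalf).mono hQb) t₀
  refine ⟨t, g, ht ▸ ht₀.symm, ht_le, hg_le, hg, fun n x hx => ?_⟩
  rw [hQ n hx]
  exact hdiv n x hx

lemma IsTransverse.exists_sub_eq_pow_mul {v : Fin d → ℂ} {ρ' ρ m L : ℝ}
    (hv : IsTransverse P v ρ' ρ m) (hP : AnalyticOnNhd ℂ P (polydisk d ρ))
    (hL : ∀ x ∈ polydisk d ρ, ‖P x‖ ≤ L) (hM : IsRegularWeight M) {b : ℕ → ℝ}
    (hb : IsGeomBounded b M) {F : ℕ → (Fin d → ℂ) → ℂ}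
    (hF : ∀ n, AnalyticOnNhd ℂ (F n) (polydisk d ρ)) (hFb : ∀ n, ∀ x ∈ polydisk d ρ, ‖F n x‖ ≤ b n)
    {S : Set ℂ} (hS : ∃ᶠ z in 𝓝[≠] 0, z ∈ S) {f : (Fin d → ℂ) → ℂ}
    (hle : ∀ n, ∀ x ∈ polydisk d ρ, (∀ j, x j ≠ 0) → P x ∈ S → ‖f x - F n x‖ ≤ b n * ‖P x‖ ^ n) :
    ∃ (q : ℕ → (Fin d → ℂ) → ℂ) (b' : ℕ → ℝ), IsGeomBounded b' M ∧
      (∀ n, SeparatelyHolomorphic d ρ' (q n)) ∧ (∀ n, ∀ x ∈ polydisk d ρ', ‖q n x‖ ≤ b' n) ∧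
      ∀ n, ∀ x ∈ polydisk d ρ', F (n + 1) x - F n x = P x ^ n * q n x := by
  have hquot (n : ℕ) := hv.exists_eq_pow_mul hP (h := fun x => F (n + 1) x - F n x)
    (fun x hx => (hF (n + 1) x hx).fun_sub (hF n x hx)) (M := b (n + 1) + b n)
    (fun x hx => (norm_sub_le _ _).trans (add_le_add (hFb (n + 1) x hx) (hFb n x hx)))
    hS (C := b n + b (n + 1) * L) (N := n) fun x hx hx0 hxS => by
      have hbn : 0 ≤ b (n + 1) := (norm_nonneg _).trans (hFb (n + 1) x hx)
      calc ‖F (n + 1) x - F n x‖ = ‖f x - F n x - (f x - F (n + 1) x)‖ := by congr 1; ring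
        _ ≤ ‖f x - F n x‖ + ‖f x - F (n + 1) x‖ := norm_sub_le _ _
        _ ≤ b n * ‖P x‖ ^ n + b (n + 1) * ‖P x‖ ^ (n + 1) :=
            add_le_add (hle n x hx hx0 hxS) (hle (n + 1) x hx hx0 hxS)
        _ = b n * ‖P x‖ ^ n + b (n + 1) * ‖P x‖ * ‖P x‖ ^ n := by ring
        _ ≤ b n * ‖P x‖ ^ n + b (n + 1) * L * ‖P x‖ ^ n := by gcongr; exact hL x hx
        _ = (b n + b (n + 1) * L) * ‖P x‖ ^ n := by ring
  choose q hq hqb hFq using hquot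
  exact ⟨q, _, ((hb.succ hM).add hb fun n => (hM.pos n).le).div_pow hv.pos, hq, hqb, hFq⟩

lemma sum_mul_pow_eq_sub_mul_pow {A : Type*} [CommRing A] {F q g t : ℕ → A} {p : A}
    (h₀ : t 0 = F 0) (hF : ∀ n, F (n + 1) - F n = p ^ n * q n)
    (hdiv : ∀ n, q n + t n = p * t (n + 1) + g n) (N : ℕ) :
    ∑ n ∈ Finset.range N, g n * p ^ n = F N - t N * p ^ N := by
  induction N with
  | zero => simp [h₀]
  | succ N ih =>
    rw [Finset.sum_range_succ, ih]
    linear_combination -p ^ N * hdiv N - hF N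

lemma norm_sub_sum_mul_pow_le {𝕜 : Type*} [NormedField 𝕜] {F q g t : ℕ → 𝕜} {p y : 𝕜}
    (h₀ : t 0 = F 0) (hF : ∀ n, F (n + 1) - F n = p ^ n * q n)
    (hdiv : ∀ n, q n + t n = p * t (n + 1) + g n) {N : ℕ} {b τ : ℝ}
    (hy : ‖y - F N‖ ≤ b * ‖p‖ ^ N) (ht : ‖t N‖ ≤ τ) :
    ‖y - ∑ n ∈ Finset.range N, g n * p ^ n‖ ≤ (b + τ) * ‖p‖ ^ N := by
  rw [sum_mul_pow_eq_sub_mul_pow h₀ hF hdiv, sub_sub_eq_add_sub, add_sub_right_comm, add_mul]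
  refine norm_add_le_of_le hy ?_
  rw [norm_mul, norm_pow]
  gcongr

lemma exists_sub_eq_pow_mul_of_forall_mem_PSector (hR : 0 < R)
    (hP : AnalyticOnNhd ℂ P (polydisk d R))
    (hdom : ∀ δ > 0, ∃ v : Fin d → ℂ, (∀ j, v j ≠ 0) ∧ (∀ j, ‖v j‖ < δ) ∧ IsDominatedAt v a P)
    {θ₁ θ₂ : ℝ} (hθ : θ₁ < θ₂) (hM : IsRegularWeight M) {b : ℕ → ℝ} (hb : IsGeomBounded b M)
    {ρ₁ : ℝ} (hρ₁ : 0 < ρ₁) {f : (Fin d → ℂ) → ℂ} {F : ℕ → (Fin d → ℂ) → ℂ}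
    (hF : ∀ n, AnalyticOnNhd ℂ (F n) (polydisk d ρ₁))
    (hFb : ∀ n, ∀ x ∈ polydisk d ρ₁, ‖F n x‖ ≤ b n)
    (hfF : ∀ n, ∀ x ∈ PSector d P θ₁ θ₂ R ∩ polydisk d ρ₁, ‖f x - F n x‖ ≤ b n * ‖P x‖ ^ n) :
    ∃ ρ > 0, ρ ≤ ρ₁ ∧ ∃ (q : ℕ → (Fin d → ℂ) → ℂ) (b' : ℕ → ℝ), IsGeomBounded b' M ∧
      (∀ n, SeparatelyHolomorphic d ρ (q n)) ∧ (∀ n, ∀ x ∈ polydisk d ρ, ‖q n x‖ ≤ b' n) ∧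
      ∀ n, ∀ x ∈ polydisk d ρ, F (n + 1) x - F n x = P x ^ n * q n x := by
  obtain ⟨r, hr, hr_le, L, hL⟩ := exists_forall_polydisk_norm_le
    (hP 0 fun j => by simpa using hR).continuousAt (lt_min hR hρ₁)
  obtain ⟨hrR, hrρ₁⟩ := le_min_iff.1 hr_le
  have hPr := hP.mono (polydisk_subset_polydisk hrR)
  have hsub : polydisk d r ⊆ polydisk d ρ₁ := polydisk_subset_polydisk hrρ₁
  obtain ⟨v, hv0, hvr, hv⟩ := hdom (r / 2) (half_pos hr)
  obtain ⟨m, hm, hPm⟩ := hv.exists_le_norm_smul hv0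
  obtain ⟨ρ, hρ, hρr, htrans⟩ := exists_isTransverse hr hPr hv0 (fun j => (hvr j).le) hm hPm
  refine ⟨ρ, hρ, hρr.trans hrρ₁, htrans.exists_sub_eq_pow_mul hPr hL hM hb
    (fun n => (hF n).mono hsub) (fun n x hx => hFb n x (hsub hx))
    (frequently_nhdsNE_zero_mem_argSector hθ) (f := f) fun n x hx hx0 hPx => ?_⟩
  exact hfF n x ⟨⟨fun j => ⟨norm_pos_iff.2 (hx0 j), (hx j).trans_le hrR⟩, hPx⟩, hsub hx⟩

end StandardForm

theorem standard_form_of_P_s_Gevrey_asymptotic_expansions_general {d : ℕ} {M : ℕ → ℝ}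
    (hM : IsRegularWeight M) {ℓ : Fin d → ℝ} (hℓ : ∀ j, 0 < ℓ j) {R : ℝ} (hR : 0 < R)
    {P : (Fin d → ℂ) → ℂ} (hP : AnalyticOnNhd ℂ P (polydisk d R)) {a : Fin d → ℕ}
    (ha : mixedPartial a P 0 ≠ 0)
    (hmin : ∀ β, mixedPartial β P 0 ≠ 0 → β ≠ a → ∑ j, ℓ j * (a j : ℝ) < ∑ j, ℓ j * (β j : ℝ))
    {θ₁ θ₂ : ℝ} (hθ : θ₁ < θ₂) {f : (Fin d → ℂ) → ℂ} {ρ₁ : ℝ} (hρ₁ : 0 < ρ₁)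
    {F : ℕ → (Fin d → ℂ) → ℂ} (hF : ∀ n, AnalyticOnNhd ℂ (F n) (polydisk d ρ₁))
    {b : ℕ → ℝ} (hb : IsGeomBounded b M) (hFb : ∀ n, ∀ x ∈ polydisk d ρ₁, ‖F n x‖ ≤ b n)
    (hfF : ∀ n, ∀ x ∈ PSector d P θ₁ θ₂ R ∩ polydisk d ρ₁, ‖f x - F n x‖ ≤ b n * ‖P x‖ ^ n) :
    ∃ ρ > 0, ∃ g : ℕ → (Fin d → ℂ) → ℂ, ∃ K A : ℝ, 0 < K ∧ 0 < A ∧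
      (∀ n, AnalyticOnNhd ℂ (g n) (polydisk d ρ)) ∧
      (∀ n β, (∀ j, a j ≤ β j) → mixedPartial β (g n) 0 = 0) ∧
      (∀ n, ∀ x ∈ polydisk d ρ, ‖g n x‖ ≤ K * A ^ n * M n) ∧
      ∀ N, ∀ x ∈ PSector d P θ₁ θ₂ R ∩ polydisk d ρ,
        ‖f x - ∑ n ∈ Finset.range N, g n x * P x ^ n‖ ≤ K * A ^ N * M N * ‖P x‖ ^ N := by
  have hdom {δ : ℝ} := exists_isDominatedAt_of_mixedPartial (δ := δ) hℓ hR hP ha hmin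
  obtain ⟨r, hr, hrρ₁, q, b', hb', hq, hqb, hFq⟩ :=
    exists_sub_eq_pow_mul_of_forall_mem_PSector hR hP (fun _ => hdom) hθ hM hb hρ₁ hF hFb hfF
  have hsub : polydisk d r ⊆ polydisk d ρ₁ := polydisk_subset_polydisk hrρ₁
  obtain ⟨w, hw0, hwr, hw⟩ := hdom (show 0 < r / 4 by positivity)
  obtain ⟨t, g, ht₀, ht, hg, hg_vanish, hdiv⟩ :=
    hw.exists_iterated_division_of_separatelyHolomorphic hM hr (fun j => (hwr j).le)
      (.of_analyticOnNhd ((hF 0).mono hsub)) (fun x hx => hFb 0 x (hsub hx)) hb' hq hqb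
  obtain ⟨ρ, hρ, hρr, hρw⟩ := exists_pos_le_forall_le_norm hw0 hr
  have hM₀ : ∀ n, 0 ≤ M n := fun n => (hM.pos n).le
  obtain ⟨K, A, hK, hA, hKA⟩ := hg.add (hb.add ht hM₀) hM₀
  have hb₀ : ∀ n, 0 ≤ b n := fun n =>
    (norm_nonneg _).trans (hFb n 0 fun j => by simpa using hρ₁)
  refine ⟨ρ, hρ, fun n => scaledSum w (g n), K, A, hK, hA,
    fun n => analyticOnNhd_scaledSum hρ hρw _,
    fun n β hβ => mixedPartial_scaledSum_eq_zero hρ hρw (hg_vanish n β hβ), fun n x hx => ?_,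
    fun N x ⟨hxP, hx⟩ => ?_⟩
  · have hxw := polydisk_subset_closedPolydisk hρw hx
    linarith [norm_scaledSum_le hxw (g n), hKA n, hb₀ n, norm_nonneg (t n)]
  · have hxw := polydisk_subset_closedPolydisk hρw hx
    have hxr := polydisk_subset_polydisk hρr hx
    refine (norm_sub_sum_mul_pow_le (F := (F · x)) (t := fun n => scaledSum w (t n) x) (ht₀ hxw)
      (hFq · x hxr) (hdiv · x hxw) (hfF N x ⟨hxP, hsub hxr⟩) (norm_scaledSum_le hxw (t N))).trans ?_
    gcongr
    linarith [hKA N, norm_nonneg (g N)]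

/-- **Standard form of `P`-`s`-Gevrey asymptotic expansions** (Theorem 7.3, part (1)).
If a holomorphic `f` on a `P`-sector admits a `P`-`s`-Gevrey asymptotic expansion in the
estimate sense, then there are bounded holomorphic coefficients `g_n`, with Taylor
coefficients supported off `a + ℕ^d` and Gevrey bounds `sup|g_n| ≤ K·A^n·Γ(sn+1)`, such
that `|f − Σ_{n<N} g_n·P^n| ≤ K·A^N·Γ(sN+1)·|P|^N` on the sector near `0`. -/
theorem standard_form_of_P_s_Gevrey_asymptotic_expansions
    (d : ℕ) (hd : 1 ≤ d) (s : ℝ) (hs : 0 < s)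
    (ℓ : Fin d → ℝ) (hℓpos : ∀ j, 0 < ℓ j)
    (hℓinj : Function.Injective fun β : Fin d → ℕ => ∑ j, ℓ j * (β j : ℝ))
    (R : ℝ) (hR : 0 < R)
    (P : (Fin d → ℂ) → ℂ) (hP : AnalyticOnNhd ℂ P (polydisk d R))
    (hP0 : P 0 = 0) (hPne : ∃ x ∈ polydisk d R, P x ≠ 0)
    (a : Fin d → ℕ)
    (ha : mixedPartial a P 0 ≠ 0)
    (hamin : ∀ β : Fin d → ℕ, mixedPartial β P 0 ≠ 0 → β ≠ a →
      ∑ j, ℓ j * (a j : ℝ) < ∑ j, ℓ j * (β j : ℝ))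
    (θ₁ θ₂ : ℝ) (hθ : θ₁ < θ₂) (hθ2 : θ₂ ≤ θ₁ + 2 * Real.pi)
    (f : (Fin d → ℂ) → ℂ) (hf : AnalyticOnNhd ℂ f (PSector d P θ₁ θ₂ R))
    (ρ₁ : ℝ) (hρ₁ : 0 < ρ₁)
    (fseq : ℕ → (Fin d → ℂ) → ℂ) (K₀ A₀ : ℝ) (hK₀ : 0 < K₀) (hA₀ : 0 < A₀)
    (hfseqA : ∀ n, AnalyticOnNhd ℂ (fseq n) (polydisk d ρ₁))
    (hfseqB : ∀ n : ℕ, ∀ x ∈ polydisk d ρ₁,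
      ‖fseq n x‖ ≤ K₀ * A₀ ^ n * Real.Gamma (s * n + 1))
    (hest : ∀ n : ℕ, ∀ x ∈ PSector d P θ₁ θ₂ R ∩ polydisk d ρ₁,
      ‖f x - fseq n x‖ ≤
        K₀ * A₀ ^ n * Real.Gamma (s * n + 1) * ‖P x‖ ^ n) :
    ∃ ρ > 0, ∃ g : ℕ → (Fin d → ℂ) → ℂ, ∃ K A : ℝ, 0 < K ∧ 0 < A ∧
      (∀ n, AnalyticOnNhd ℂ (g n) (polydisk d ρ)) ∧
      (∀ n, ∀ β : Fin d → ℕ, (∀ j, a j ≤ β j) → mixedPartial β (g n) 0 = 0) ∧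
      (∀ n : ℕ, ∀ x ∈ polydisk d ρ,
        ‖g n x‖ ≤ K * A ^ n * Real.Gamma (s * n + 1)) ∧
      (∀ N : ℕ, ∀ x ∈ PSector d P θ₁ θ₂ R ∩ polydisk d ρ,
        ‖f x - ∑ n ∈ Finset.range N, g n x * P x ^ n‖ ≤
          K * A ^ N * Real.Gamma (s * N + 1) * ‖P x‖ ^ N) := by
  exact standard_form_of_P_s_Gevrey_asymptotic_expansions_general (isRegularWeight_Gamma hs) hℓpos
    hR hP ha hamin hθ hρ₁ hfseqA ⟨K₀, A₀, hK₀, hA₀, fun _ => le_rfl⟩ hfseqB hest
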